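/- arXiv:2601.05945 — 6 statements merged into one kernel-verified Lean document; each statement's English description precedes it below -/
import Mathlib

section
/- Let F : ℝ → ℝ be Borel measurable with F ∈ L²(π₁). Then the following are equivalent: (i) for every k ∈ ℕ, m^k · ĉ_m(F) → 0 as m → ∞ (i.e. the normalised Hermite coefficients of F decay faster than any inverse power of m); (ii) there exists an infinitely differentiable function G : ℝ → ℝ with G = F π₁-almost everywhere and G^(n) ∈ L²(π₁) for every n ∈ ℕ. -/
open MeasureTheory ProbabilityTheory Real Filter

/-- The standard Gaussian measure `π₁` on `ℝ`. -/
noncomputable def stdGaussian : Measure ℝ := gaussianReal 0 1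

/-- The `m`-th probabilists' Hermite polynomial `He_m`, evaluated at `x`. -/
noncomputable def He (m : ℕ) (x : ℝ) : ℝ := Polynomial.aeval x (Polynomial.hermite m)

/-- The normalised Hermite coefficients `ĉ_m(F)`. -/
noncomputable def hermiteCoeff (F : ℝ → ℝ) (m : ℕ) : ℝ :=
  (Real.sqrt (Nat.factorial m))⁻¹ * ∫ x, F x * He m x ∂stdGaussian

/-!
Write `h_m = He_m / √(m!)` and `φ` for the density of `π₁`. Since `h_m' = √m h_{m-1}` and, by
integration by parts, `ĉ_m(G') = √(m+1) ĉ_{m+1}(G)`, differentiation acts on both series and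
coefficients by the same weighted shift. If all derivatives of `G` lie in `L²(π₁)`, the iterated
shifts of `ĉ(G)` are bounded, so `ĉ(G)` decays rapidly. Conversely, `(φ h_m)' = -√(m+1) φ h_{m+1}`
gives `φ |h_m| ≤ √(m+1)`, so for rapidly decaying `c` the series `∑ c_m h_m` can be differentiated
termwise any number of times, and each derivative is again such a series, absolutely convergent in
`L²(π₁)`. With `c = ĉ(F)` it represents `F` because the `h_m` form a Hilbert basis: a function in
`L²(π₁)` orthogonal to all polynomials has vanishing Fourier transform against `π₁`, expanding the
exponential under the integral.
-/

open scoped ENNReal NNReal InnerProductSpace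

section FourierUniqueness

variable {E : Type*} [NormedAddCommGroup E] [InnerProductSpace ℝ E] [MeasurableSpace E]
  {μ : Measure E} {f : E → ℝ}

lemma charFun_withDensity_ofReal (hf : AEMeasurable f μ) (t : E) :
    charFun (μ.withDensity fun x => ENNReal.ofReal (f x)) t =
      ∫ x, ((max (f x) 0 : ℝ) : ℂ) * Complex.exp (⟪x, t⟫_ℝ * Complex.I) ∂μ := by
  rw [charFun_apply, integral_withDensity_eq_integral_toReal_smul₀ hf.ennreal_ofReal
    (ae_of_all _ fun _ => ENNReal.ofReal_lt_top)]
  simp [ENNReal.toReal_ofReal']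

variable [BorelSpace E] [SecondCountableTopology E]

lemma integrable_mul_exp_inner_mul_I (hf : Integrable f μ) (t : E) :
    Integrable (fun x => (f x : ℂ) * Complex.exp (⟪x, t⟫_ℝ * Complex.I)) μ :=
  hf.ofReal.mul_bdd (c := 1) (by fun_prop)
    (ae_of_all _ fun x => (Complex.norm_exp_ofReal_mul_I _).le)

lemma charFun_withDensity_ofReal_sub_charFun_withDensity_ofReal_neg (hf : Integrable f μ) (t : E) :
    charFun (μ.withDensity fun x => ENNReal.ofReal (f x)) t -
        charFun (μ.withDensity fun x => ENNReal.ofReal (-f x)) t =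
      ∫ x, (f x : ℂ) * Complex.exp (⟪x, t⟫_ℝ * Complex.I) ∂μ := by
  have hneg : AEMeasurable (fun x => -f x) μ := hf.aemeasurable.neg
  rw [charFun_withDensity_ofReal hf.aemeasurable, charFun_withDensity_ofReal hneg,
    ← integral_sub (integrable_mul_exp_inner_mul_I hf.pos_part t)
      (integrable_mul_exp_inner_mul_I hf.neg_part t)]
  simp only [← sub_mul, ← Complex.ofReal_sub, max_zero_sub_max_neg_zero_eq_self]

lemma ae_eq_zero_of_forall_integral_mul_exp_inner_eq_zero [CompleteSpace E] (hf : Integrable f μ)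
    (h : ∀ t : E, ∫ x, (f x : ℂ) * Complex.exp (⟪x, t⟫_ℝ * Complex.I) ∂μ = 0) :
    f =ᵐ[μ] 0 := by
  have := isFiniteMeasure_withDensity_ofReal hf.2
  have := isFiniteMeasure_withDensity_ofReal hf.neg.2
  have hdensity : (μ.withDensity fun x => ENNReal.ofReal (f x)) =
      μ.withDensity fun x => ENNReal.ofReal (-f x) := by
    refine Measure.ext_of_charFun (funext fun t => sub_eq_zero.1 ?_)
    rw [charFun_withDensity_ofReal_sub_charFun_withDensity_ofReal_neg hf, h]
  filter_upwards [(withDensity_eq_iff hf.aemeasurable.ennreal_ofReal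
    hf.aemeasurable.neg.ennreal_ofReal hf.lintegral_lt_top.ne).1 hdensity] with x hx
  have hmax := congrArg ENNReal.toReal hx
  simp only [Pi.neg_apply, ENNReal.toReal_ofReal'] at hmax
  rw [Pi.zero_apply, ← max_zero_sub_max_neg_zero_eq_self (f x), hmax, sub_self]

end FourierUniqueness

section MomentUniqueness

variable {μ : Measure ℝ} {f : ℝ → ℝ}

lemma hasSum_integral_pow_mul (hexp : ∀ t : ℝ, Integrable (fun x => rexp (t * |x|) * f x) μ)
    (s : ℝ) :
    HasSum (fun n : ℕ => (s * Complex.I) ^ n / n.factorial * (∫ x, x ^ n * f x ∂μ : ℝ))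
      (∫ x, (f x : ℂ) * Complex.exp (s * x * Complex.I) ∂μ) := by
  have hterm : ∀ n : ℕ, (s * Complex.I) ^ n / n.factorial * (∫ x, x ^ n * f x ∂μ : ℝ) =
      ∫ x, (f x : ℂ) * ((s * x * Complex.I) ^ n / n.factorial) ∂μ := fun n => by
    rw [← integral_complex_ofReal, ← integral_const_mul]
    congr 1 with x
    push_cast
    ring
  simp only [hterm]
  refine hasSum_integral_of_dominated_convergence
    (fun n x => |f x| * (|s * x| ^ n / n.factorial)) (fun n => ?_)
    (fun n => ae_of_all _ fun x => ?_)
    (ae_of_all _ fun x => (Real.summable_pow_div_factorial _).mul_left _) ?_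
    (ae_of_all _ fun x => ?_)
  · have hf : AEStronglyMeasurable f μ := by simpa using (hexp 0).1
    fun_prop
  · simp [abs_mul]
  · refine (hexp |s|).abs.congr (ae_of_all _ fun x => ?_)
    simp only [tsum_mul_left, abs_mul, Real.abs_exp, mul_comm (rexp _)]
    rw [Real.exp_eq_exp_ℝ, NormedSpace.exp_eq_tsum_div]
  · rw [Complex.exp_eq_exp_ℂ]
    exact (NormedSpace.expSeries_div_hasSum_exp (s * x * Complex.I : ℂ)).mul_left _

lemma ae_eq_zero_of_forall_integral_pow_mul_eq_zero
    (hexp : ∀ t : ℝ, Integrable (fun x => rexp (t * |x|) * f x) μ)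
    (hmoment : ∀ n : ℕ, ∫ x, x ^ n * f x ∂μ = 0) : f =ᵐ[μ] 0 := by
  have hf : Integrable f μ := by simpa using hexp 0
  refine ae_eq_zero_of_forall_integral_mul_exp_inner_eq_zero hf fun s => ?_
  have hsum := hasSum_integral_pow_mul hexp s
  simp only [hmoment, Complex.ofReal_zero, mul_zero] at hsum
  simpa using hsum.unique hasSum_zero

end MomentUniqueness

section GaussianReal

variable {a : ℝ} {v : ℝ≥0} {f f' : ℝ → ℝ}

lemma memLp_exp_mul_abs_gaussianReal (t : ℝ) {p : ℝ≥0∞} (hp : p ≠ ∞) :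
    MemLp (fun x => rexp (t * |x|)) p (gaussianReal a v) := by
  rcases eq_or_ne p 0 with rfl | hp0
  · exact memLp_zero_iff_aestronglyMeasurable.2 (by fun_prop)
  · rw [← integrable_norm_rpow_iff (by fun_prop) hp0 hp]
    simp only [Real.norm_eq_abs, Real.abs_exp, ← Real.exp_mul, mul_right_comm t _ p.toReal]
    exact integrable_exp_mul_abs (X := fun x => x) (integrable_exp_mul_gaussianReal _)
      (integrable_exp_mul_gaussianReal _)

lemma memLp_polynomial_eval_gaussianReal (q : Polynomial ℝ) {p : ℝ≥0∞} (hp : p ≠ ∞) :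
    MemLp (fun x => q.eval x) p (gaussianReal a v) := by
  induction q using Polynomial.induction_on' with
  | add q r hq hr => simpa using! hq.add hr
  | monomial n b =>
    simp only [Polynomial.eval_monomial]
    refine MemLp.const_mul (((memLp_exp_mul_abs_gaussianReal 1 hp).const_mul n.factorial).mono
      (by fun_prop) (ae_of_all _ fun x => ?_)) b
    have := Real.pow_div_factorial_le_exp |x| (abs_nonneg x) n
    rw [div_le_iff₀' (by positivity)] at this
    simpa using this

lemma integrable_gaussianReal_iff (hv : v ≠ 0) :
    Integrable f (gaussianReal a v) ↔ Integrable fun x => gaussianPDFReal a v x * f x := by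
  rw [gaussianReal_of_var_ne_zero _ hv, integrable_withDensity_iff_integrable_smul'
    (measurable_gaussianPDF _ _) (ae_of_all _ fun x => gaussianPDF_lt_top)]
  simp only [toReal_gaussianPDF, smul_eq_mul]

lemma hasDerivAt_gaussianPDFReal (x : ℝ) :
    HasDerivAt (gaussianPDFReal a v) (-((x - a) / v * gaussianPDFReal a v x)) x := by
  have hexponent : HasDerivAt (fun y => -(y - a) ^ 2 / (2 * v)) (-((x - a) / v)) x := by
    refine ((((hasDerivAt_id' x).sub_const a).fun_pow 2).fun_neg.div_const _).congr_deriv ?_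
    norm_num
    rw [neg_div, mul_div_mul_left _ _ two_ne_zero]
  refine (hexponent.exp.const_mul (√(2 * π * v))⁻¹).congr_deriv ?_
  simp only [gaussianPDFReal]
  ring

lemma hasDerivAt_gaussianPDFReal_mul {x : ℝ} (hf : HasDerivAt f (f' x) x) :
    HasDerivAt (fun y => gaussianPDFReal a v y * f y)
      (gaussianPDFReal a v x * (f' x - (x - a) / v * f x)) x :=
  ((hasDerivAt_gaussianPDFReal x).fun_mul hf).congr_deriv (by ring)

lemma integral_deriv_sub_mul_gaussianReal (hv : v ≠ 0) (hf : ∀ x, HasDerivAt f (f' x) x)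
    (hint : Integrable f (gaussianReal a v))
    (hint' : Integrable (fun x => f' x - (x - a) / v * f x) (gaussianReal a v)) :
    ∫ x, (f' x - (x - a) / v * f x) ∂gaussianReal a v = 0 := by
  rw [integral_gaussianReal_eq_integral_smul hv]
  exact integral_eq_zero_of_hasDerivAt_of_integrable
    (fun x => hasDerivAt_gaussianPDFReal_mul (hf x))
    ((integrable_gaussianReal_iff hv).1 hint') ((integrable_gaussianReal_iff hv).1 hint)

lemma gaussianPDFReal_mul_abs_le_integral (hv : v ≠ 0) (hf : ∀ x, HasDerivAt f (f' x) x)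
    (hint : Integrable f (gaussianReal a v))
    (hint' : Integrable (fun x => f' x - (x - a) / v * f x) (gaussianReal a v)) (x : ℝ) :
    gaussianPDFReal a v x * |f x| ≤ ∫ y, |f' y - (y - a) / v * f y| ∂gaussianReal a v := by
  have hderiv := fun y => hasDerivAt_gaussianPDFReal_mul (a := a) (v := v) (hf y)
  have hint := (integrable_gaussianReal_iff hv).1 hint
  have hint' := (integrable_gaussianReal_iff hv).1 hint'
  have hatBot := tendsto_zero_of_hasDerivAt_of_integrableOn_Iic (a := x) (fun y _ => hderiv y)
    hint'.integrableOn hint.integrableOn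
  have hftc := integral_Iic_of_hasDerivAt_of_tendsto' (a := x) (fun y _ => hderiv y)
    hint'.integrableOn hatBot
  rw [integral_gaussianReal_eq_integral_smul hv]
  calc gaussianPDFReal a v x * |f x|
      = |∫ y in Set.Iic x, gaussianPDFReal a v y * (f' y - (y - a) / v * f y)| := by
        rw [hftc, sub_zero, abs_mul, abs_of_nonneg (gaussianPDFReal_nonneg a v x)]
    _ ≤ ∫ y in Set.Iic x, |gaussianPDFReal a v y * (f' y - (y - a) / v * f y)| :=
        abs_integral_le_integral_abs
    _ ≤ ∫ y, |gaussianPDFReal a v y * (f' y - (y - a) / v * f y)| :=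
        setIntegral_le_integral hint'.abs (ae_of_all _ fun _ => abs_nonneg _)
    _ = ∫ y, gaussianPDFReal a v y • |f' y - (y - a) / v * f y| := by
        simp only [abs_mul, abs_of_nonneg (gaussianPDFReal_nonneg a v _), smul_eq_mul]

end GaussianReal

local notation "π₁" => (_root_.stdGaussian : Measure ℝ)

section HermitePolynomials

lemma derivative_hermite (n : ℕ) : Polynomial.derivative (Polynomial.hermite n) =
    (n : Polynomial ℤ) * Polynomial.hermite (n - 1) := by
  induction n with
  | zero => simp
  | succ n ih =>
    have hpred : (n : Polynomial ℤ) * Polynomial.hermite n = (n : Polynomial ℤ) *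
        (Polynomial.X * Polynomial.hermite (n - 1) -
          Polynomial.derivative (Polynomial.hermite (n - 1))) := by
      cases n with
      | zero => simp
      | succ n => rw [Polynomial.hermite_succ, Nat.add_sub_cancel]
    rw [Polynomial.hermite_succ, ih]
    simp only [Polynomial.derivative_sub, Polynomial.derivative_mul, Polynomial.derivative_X,
      Polynomial.derivative_natCast, ih, Nat.add_sub_cancel, Nat.cast_add, Nat.cast_one, add_mul]
    rw [hpred]
    ring

lemma He_zero (x : ℝ) : He 0 x = 1 := by simp [He]

lemma hasDerivAt_He (n : ℕ) (x : ℝ) : HasDerivAt (He n) (n * He (n - 1) x) x :=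
  (Polynomial.hasDerivAt_aeval (Polynomial.hermite n) x).congr_deriv
    (by simp [derivative_hermite, He])

lemma He_succ (n : ℕ) (x : ℝ) : He (n + 1) x = x * He n x - n * He (n - 1) x := by
  simp [He, Polynomial.hermite_succ, derivative_hermite]

lemma memLp_pow_mul_He (k n : ℕ) : MemLp (fun x => x ^ k * He n x) 2 π₁ := by
  have h : MemLp _ 2 π₁ := memLp_polynomial_eval_gaussianReal
    (Polynomial.X ^ k * (Polynomial.hermite n).map (Int.castRingHom ℝ)) ENNReal.ofNat_ne_top
  simpa [He, Polynomial.aeval_def, Polynomial.eval_map] using h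

lemma memLp_He (n : ℕ) : MemLp (He n) 2 π₁ := by
  simpa using memLp_pow_mul_He 0 n

end HermitePolynomials

instance : IsProbabilityMeasure π₁ := inferInstanceAs (IsProbabilityMeasure (gaussianReal 0 1))

section Orthogonality

variable {G G' : ℝ → ℝ}

lemma integral_mul_He_succ (hG : ∀ x, HasDerivAt G (G' x) x) (hL : MemLp G 2 π₁)
    (hL' : MemLp G' 2 π₁) (m : ℕ) :
    ∫ x, G x * He (m + 1) x ∂π₁ = ∫ x, G' x * He m x ∂π₁ := by
  have hint : Integrable (fun x => G x * He (m + 1) x) π₁ := hL.integrable_mul (memLp_He _)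
  have hint' : Integrable (fun x => G' x * He m x) π₁ := hL'.integrable_mul (memLp_He _)
  have hladder : ∀ x, (G' x * He m x + G x * (m * He (m - 1) x)) -
      (x - 0) / (1 : ℝ≥0) * (G x * He m x) = G' x * He m x - G x * He (m + 1) x := fun x => by
    rw [He_succ, NNReal.coe_one]
    ring
  have hstein := integral_deriv_sub_mul_gaussianReal one_ne_zero
    (fun x => (hG x).fun_mul (hasDerivAt_He m x)) (hL.integrable_mul (memLp_He m))
    ((hint'.sub hint).congr (ae_of_all _ fun x => (hladder x).symm))
  simp only [hladder] at hstein
  exact (sub_eq_zero.1 ((integral_sub hint' hint).symm.trans hstein)).symm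

lemma integral_He_mul_He_succ (n m : ℕ) :
    ∫ x, He n x * He (m + 1) x ∂π₁ = n * ∫ x, He (n - 1) x * He m x ∂π₁ := by
  rw [integral_mul_He_succ (hasDerivAt_He n) (memLp_He n) ((memLp_He _).const_mul _)]
  simp only [mul_assoc, integral_const_mul]

lemma integral_He_mul_He (n m : ℕ) :
    ∫ x, He n x * He m x ∂π₁ = if n = m then (m.factorial : ℝ) else 0 := by
  induction m generalizing n with
  | zero =>
    cases n with
    | zero => simp [He_zero]
    | succ n => simpa [mul_comm, He_zero] using integral_He_mul_He_succ 0 n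
  | succ m ih =>
    rw [integral_He_mul_He_succ, ih]
    cases n with
    | zero => simp
    | succ n => by_cases h : n = m <;> simp [h, Nat.factorial_succ]

end Orthogonality

section NormalizedHermite

/-- The Hermite polynomial `He_m / √(m!)` of unit norm in `L²(π₁)`. -/
noncomputable def normHe (m : ℕ) (x : ℝ) : ℝ := (√(m.factorial : ℝ))⁻¹ * He m x

lemma memLp_normHe (m : ℕ) : MemLp (normHe m) 2 π₁ := (memLp_He m).const_mul _

lemma integral_normHe_mul_normHe (n m : ℕ) :
    ∫ x, normHe n x * normHe m x ∂π₁ = if n = m then 1 else 0 := by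
  have hfactor : ∀ x, normHe n x * normHe m x =
      (√(n.factorial : ℝ))⁻¹ * (√(m.factorial : ℝ))⁻¹ * (He n x * He m x) := fun x =>
    mul_mul_mul_comm _ _ _ _
  simp only [hfactor, integral_const_mul, integral_He_mul_He]
  split_ifs with h
  · have hpos : (0 : ℝ) < m.factorial := by positivity
    rw [h, ← mul_inv, Real.mul_self_sqrt hpos.le, inv_mul_cancel₀ hpos.ne']
  · exact mul_zero _

lemma integral_abs_normHe_le_one (m : ℕ) : ∫ x, |normHe m x| ∂π₁ ≤ 1 := by
  have hsq : ∫ x, |normHe m x| ^ 2 ∂π₁ = 1 := by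
    simpa [pow_two] using integral_normHe_mul_normHe m m
  have hvar := variance_nonneg |normHe m| π₁
  rw [variance_eq_sub (memLp_normHe m).abs] at hvar
  simp only [Pi.pow_apply, Pi.abs_apply, hsq, sub_nonneg] at hvar
  exact (sq_le_one_iff₀ (integral_nonneg fun x => abs_nonneg _)).1 hvar

lemma sqrt_factorial_succ (m : ℕ) :
    √((m + 1).factorial : ℝ) = √((m : ℝ) + 1) * √(m.factorial : ℝ) := by
  rw [Nat.factorial_succ, Nat.cast_mul, Nat.cast_succ, Real.sqrt_mul (by positivity)]

lemma hasDerivAt_normHe_succ (m : ℕ) (x : ℝ) :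
    HasDerivAt (normHe (m + 1)) (√((m : ℝ) + 1) * normHe m x) x := by
  refine ((hasDerivAt_He (m + 1) x).const_mul _).congr_deriv ?_
  rw [normHe, sqrt_factorial_succ, Nat.cast_succ, Nat.add_sub_cancel]
  field_simp
  rw [Real.sq_sqrt (by positivity)]

lemma hasDerivAt_normHe (m : ℕ) (x : ℝ) :
    HasDerivAt (normHe m) (√(m : ℝ) * normHe (m - 1) x) x := by
  cases m with
  | zero => exact ((hasDerivAt_He 0 x).const_mul _).congr_deriv (by simp)
  | succ m => simpa using hasDerivAt_normHe_succ m x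

lemma deriv_normHe_sub_mul_normHe (m : ℕ) (x : ℝ) :
    √(m : ℝ) * normHe (m - 1) x - x * normHe m x = -(√((m : ℝ) + 1) * normHe (m + 1) x) := by
  have hderiv : √(m : ℝ) * normHe (m - 1) x = (√(m.factorial : ℝ))⁻¹ * (m * He (m - 1) x) :=
    (hasDerivAt_normHe m x).unique ((hasDerivAt_He m x).const_mul _)
  rw [hderiv, normHe, normHe, He_succ, sqrt_factorial_succ]
  field_simp
  ring

-- As `(φ h)' = φ (h' - x h)`, the value of `φ h_m` at `x` is at most `√(m + 1) ‖h_{m+1}‖₁`.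
lemma gaussianPDFReal_mul_abs_normHe_le (m : ℕ) (x : ℝ) :
    gaussianPDFReal 0 1 x * |normHe m x| ≤ √((m : ℝ) + 1) := by
  have hladder : ∀ y, √(m : ℝ) * normHe (m - 1) y - (y - 0) / (1 : ℝ≥0) * normHe m y =
      -(√((m : ℝ) + 1) * normHe (m + 1) y) := fun y => by
    rw [sub_zero, NNReal.coe_one, div_one, deriv_normHe_sub_mul_normHe]
  have hint : Integrable (fun y => -(√((m : ℝ) + 1) * normHe (m + 1) y)) π₁ :=
    (((memLp_normHe (m + 1)).integrable one_le_two).const_mul _).neg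
  calc gaussianPDFReal 0 1 x * |normHe m x|
      ≤ ∫ y, |√(m : ℝ) * normHe (m - 1) y - (y - 0) / (1 : ℝ≥0) * normHe m y| ∂π₁ :=
        gaussianPDFReal_mul_abs_le_integral one_ne_zero (hasDerivAt_normHe m)
          ((memLp_normHe m).integrable one_le_two)
          (hint.congr (ae_of_all _ fun y => (hladder y).symm)) x
    _ = √((m : ℝ) + 1) * ∫ y, |normHe (m + 1) y| ∂π₁ := by
        simp only [hladder, abs_neg, abs_mul, abs_of_nonneg (Real.sqrt_nonneg _),
          integral_const_mul]
    _ ≤ √((m : ℝ) + 1) :=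
        mul_le_of_le_one_right (Real.sqrt_nonneg _) (integral_abs_normHe_le_one (m + 1))

end NormalizedHermite

section HermiteBasis

variable {f g : ℝ → ℝ}

lemma integral_mul_pow_mul_He_eq_zero (hf : MemLp f 2 π₁) (h : ∀ m, ∫ x, f x * He m x ∂π₁ = 0)
    (k m : ℕ) : ∫ x, f x * (x ^ k * He m x) ∂π₁ = 0 := by
  induction k generalizing m with
  | zero => simpa using h m
  | succ k ih =>
    have hrec : ∀ x, f x * (x ^ (k + 1) * He m x) =
        f x * (x ^ k * He (m + 1) x) + m * (f x * (x ^ k * He (m - 1) x)) := fun x => by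
      rw [He_succ]
      ring
    have hint : ∀ n, Integrable (fun x => f x * (x ^ k * He n x)) π₁ := fun n =>
      hf.integrable_mul (memLp_pow_mul_He k n)
    simp only [hrec]
    rw [integral_add (hint _) ((hint _).const_mul _), integral_const_mul, ih, ih, mul_zero,
      add_zero]

lemma ae_eq_zero_of_forall_integral_mul_He_eq_zero (hf : MemLp f 2 π₁)
    (h : ∀ m, ∫ x, f x * He m x ∂π₁ = 0) : f =ᵐ[π₁] 0 := by
  refine ae_eq_zero_of_forall_integral_pow_mul_eq_zero (fun t => ?_) fun n => ?_
  · have hexp : MemLp (fun x => rexp (t * |x|)) 2 π₁ :=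
      memLp_exp_mul_abs_gaussianReal t ENNReal.ofNat_ne_top
    exact hexp.integrable_mul hf
  · simpa [He_zero, mul_comm] using integral_mul_pow_mul_He_eq_zero hf h n 0

lemma hermiteCoeff_eq_integral_normHe (f : ℝ → ℝ) (m : ℕ) :
    hermiteCoeff f m = ∫ x, f x * normHe m x ∂π₁ := by
  rw [hermiteCoeff, ← integral_const_mul]
  simp only [normHe, mul_left_comm]

lemma hermiteCoeff_congr_ae (h : f =ᵐ[π₁] g) : hermiteCoeff f = hermiteCoeff g := by
  ext m
  exact congrArg (_ * ·) (integral_congr_ae (h.mul .rfl))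

/-- The normalised Hermite polynomial as an element of the Hilbert space `L²(π₁)`. -/
noncomputable def hermiteLp (m : ℕ) : Lp ℝ 2 π₁ := (memLp_normHe m).toLp

lemma inner_hermiteLp_toLp (hf : MemLp f 2 π₁) (m : ℕ) :
    ⟪hermiteLp m, hf.toLp⟫_ℝ = hermiteCoeff f m := by
  rw [hermiteCoeff_eq_integral_normHe, L2.inner_def]
  refine integral_congr_ae ?_
  filter_upwards [(memLp_normHe m).coeFn_toLp, hf.coeFn_toLp] with x hnorm hx
  rw [hermiteLp, hnorm, hx, RCLike.inner_apply, conj_trivial]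

lemma orthonormal_hermiteLp : Orthonormal ℝ hermiteLp := by
  rw [orthonormal_iff_ite]
  intro n m
  refine (inner_hermiteLp_toLp (memLp_normHe m) n).trans ?_
  simp only [hermiteCoeff_eq_integral_normHe, integral_normHe_mul_normHe, eq_comm]

lemma orthogonal_span_hermiteLp : (Submodule.span ℝ (Set.range hermiteLp))ᗮ = ⊥ := by
  refine (Submodule.eq_bot_iff _).2 fun f hf => (Lp.eq_zero_iff_ae_eq_zero).2 ?_
  refine ae_eq_zero_of_forall_integral_mul_He_eq_zero (Lp.memLp f) fun m => ?_
  have hcoeff : hermiteCoeff f m = 0 := by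
    rw [← inner_hermiteLp_toLp (Lp.memLp f), Lp.toLp_coeFn]
    exact (Submodule.mem_orthogonal _ _).1 hf _ (Submodule.subset_span ⟨m, rfl⟩)
  exact (mul_eq_zero.1 hcoeff).resolve_left (by positivity)

/-- The normalised Hermite polynomials as a Hilbert basis of `L²(π₁)`. -/
noncomputable def hermiteBasis : HilbertBasis ℕ ℝ (Lp ℝ 2 π₁) :=
  HilbertBasis.mkOfOrthogonalEqBot orthonormal_hermiteLp orthogonal_span_hermiteLp

lemma hasSum_hermiteCoeff_smul_hermiteLp (hf : MemLp f 2 π₁) :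
    HasSum (fun m => hermiteCoeff f m • hermiteLp m) hf.toLp := by
  simpa [HilbertBasis.repr_apply_apply, hermiteBasis, inner_hermiteLp_toLp] using
    hermiteBasis.hasSum_repr hf.toLp

lemma abs_hermiteCoeff_le_norm (hf : MemLp f 2 π₁) (m : ℕ) : |hermiteCoeff f m| ≤ ‖hf.toLp‖ := by
  rw [← inner_hermiteLp_toLp hf]
  simpa [orthonormal_hermiteLp.1 m] using abs_real_inner_le_norm (hermiteLp m) hf.toLp

end HermiteBasis

section HermiteSeries

variable {c : ℕ → ℝ}

/-- The pointwise Hermite series `∑ c_m He_m / √(m!)`, with value `0` where it diverges. -/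
noncomputable def hermiteSeries (c : ℕ → ℝ) (x : ℝ) : ℝ := ∑' m, c m * normHe m x

/-- The action of `d/dx` on normalised Hermite coefficients: `(He_m / √(m!))'` equals
`√m He_{m-1} / √((m-1)!)`, so differentiation shifts the coefficients and weights them by `√m`. -/
noncomputable def coeffDeriv (c : ℕ → ℝ) (m : ℕ) : ℝ := √((m : ℝ) + 1) * c (m + 1)

lemma coeFn_tsum_smul_hermiteLp (hc : Summable fun m => |c m|) :
    ⇑(∑' m, c m • hermiteLp m) =ᵐ[π₁] hermiteSeries c := by
  have hnorm : Summable fun m => ‖c m • hermiteLp m‖ := by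
    simpa [norm_smul, orthonormal_hermiteLp.1] using hc
  have hterm : ∀ᵐ x ∂π₁, ∀ m, (c m • hermiteLp m : Lp ℝ 2 π₁) x = c m * normHe m x := by
    refine ae_all_iff.2 fun m => ?_
    filter_upwards [Lp.coeFn_smul (c m) (hermiteLp m), (memLp_normHe m).coeFn_toLp] with x hsmul hx
    rw [hsmul, Pi.smul_apply, hermiteLp, hx, smul_eq_mul]
  filter_upwards [Lp.coeFn_tsum (tsum_enorm_ne_top_iff_summable_norm.2 hnorm),
    hterm] with x hsum hx
  rw [hsum, hermiteSeries, tsum_congr hx]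

lemma memLp_hermiteSeries (hc : Summable fun m => |c m|) : MemLp (hermiteSeries c) 2 π₁ :=
  (Lp.memLp _).ae_eq (coeFn_tsum_smul_hermiteLp hc)

lemma ae_eq_hermiteSeries_hermiteCoeff {f : ℝ → ℝ} (hf : MemLp f 2 π₁)
    (hc : Summable fun m => |hermiteCoeff f m|) : f =ᵐ[π₁] hermiteSeries (hermiteCoeff f) := by
  have hseries := coeFn_tsum_smul_hermiteLp hc
  rw [(hasSum_hermiteCoeff_smul_hermiteLp hf).tsum_eq] at hseries
  exact hf.coeFn_toLp.symm.trans hseries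

lemma abs_normHe_le {R x : ℝ} (hx : |x| ≤ R) (m : ℕ) :
    |normHe m x| ≤ √((m : ℝ) + 1) / gaussianPDFReal 0 1 R := by
  have hpdf : gaussianPDFReal 0 1 R ≤ gaussianPDFReal 0 1 x := by
    have hsq : x ^ 2 ≤ R ^ 2 := sq_le_sq' (neg_le_of_abs_le hx) (le_of_abs_le hx)
    simp only [gaussianPDFReal, sub_zero]
    gcongr
  rw [le_div_iff₀' (gaussianPDFReal_pos 0 1 R one_ne_zero)]
  exact (mul_le_mul_of_nonneg_right hpdf (abs_nonneg _)).trans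
    (gaussianPDFReal_mul_abs_normHe_le m x)

lemma summable_mul_normHe (hc : Summable fun m : ℕ => ((m : ℝ) + 1) * |c m|) (x : ℝ) :
    Summable fun m => c m * normHe m x := by
  refine Summable.of_norm_bounded (hc.div_const (gaussianPDFReal 0 1 |x|)) fun m => ?_
  have hsqrt : √((m : ℝ) + 1) ≤ (m : ℝ) + 1 := Real.sqrt_le_self_iff.2 (by simp)
  have hpdf := gaussianPDFReal_nonneg 0 1 |x|
  calc ‖c m * normHe m x‖ = |c m| * |normHe m x| := abs_mul _ _
    _ ≤ |c m| * ((m + 1) / gaussianPDFReal 0 1 |x|) := by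
        gcongr
        exact (abs_normHe_le le_rfl m).trans (by gcongr)
    _ = (m + 1) * |c m| / gaussianPDFReal 0 1 |x| := by ring

lemma abs_deriv_normHe_le {R x : ℝ} (hx : |x| ≤ R) (m : ℕ) :
    |√(m : ℝ) * normHe (m - 1) x| ≤ m / gaussianPDFReal 0 1 R := by
  cases m with
  | zero => simp
  | succ m =>
    rw [abs_mul, abs_of_nonneg (Real.sqrt_nonneg _), Nat.add_sub_cancel, Nat.cast_succ]
    calc √((m : ℝ) + 1) * |normHe m x|
        ≤ √((m : ℝ) + 1) * (√((m : ℝ) + 1) / gaussianPDFReal 0 1 R) := by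
          gcongr
          exact abs_normHe_le hx m
      _ = ((m : ℝ) + 1) / gaussianPDFReal 0 1 R := by
          rw [← mul_div_assoc, Real.mul_self_sqrt (by positivity)]

lemma hasDerivAt_hermiteSeries (hc : Summable fun m : ℕ => ((m : ℝ) + 1) * |c m|) (x : ℝ) :
    HasDerivAt (hermiteSeries c) (hermiteSeries (coeffDeriv c) x) x := by
  have hx : x ∈ Set.Ioo (-(|x| + 1)) (|x| + 1) := abs_lt.1 (lt_add_one _)
  have hbound : ∀ (m : ℕ), ∀ y ∈ Set.Ioo (-(|x| + 1)) (|x| + 1),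
      ‖c m * (√(m : ℝ) * normHe (m - 1) y)‖ ≤
        ((m : ℝ) + 1) * |c m| / gaussianPDFReal 0 1 (|x| + 1) := fun m y hy => by
    have hpdf := gaussianPDFReal_nonneg 0 1 (|x| + 1)
    rw [Real.norm_eq_abs, abs_mul, mul_comm _ |c m|, mul_div_assoc]
    gcongr
    exact (abs_deriv_normHe_le (abs_lt.2 hy).le m).trans (by gcongr; linarith)
  have hbound_summable := hc.div_const (gaussianPDFReal 0 1 (|x| + 1))
  have hderiv := hasDerivAt_tsum_of_isPreconnected hbound_summable isOpen_Ioo isPreconnected_Ioo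
    (fun m y _ => (hasDerivAt_normHe m y).const_mul (c m)) hbound hx (summable_mul_normHe hc x) hx
  refine hderiv.congr_deriv ?_
  rw [(Summable.of_norm_bounded hbound_summable fun m => hbound m x hx).tsum_eq_zero_add]
  simp only [hermiteSeries, coeffDeriv, Nat.cast_zero, Real.sqrt_zero, zero_mul, mul_zero,
    zero_add, Nat.add_sub_cancel, Nat.cast_succ]
  exact tsum_congr fun m => by ring

end HermiteSeries

section RapidDecay

variable {c : ℕ → ℝ}

/-- Decay of a sequence faster than every inverse power of its index, as in condition (i). -/
abbrev RapidDecay (c : ℕ → ℝ) : Prop :=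
  Asymptotics.SuperpolynomialDecay atTop (fun m : ℕ => (m : ℝ)) c

lemma RapidDecay.coeffDeriv (hc : RapidDecay c) : RapidDecay (coeffDeriv c) := by
  intro k
  refine squeeze_zero_norm (fun m => ?_) <| by
    simpa using ((hc (k + 1)).comp (tendsto_add_atTop_nat 1)).abs
  have hsqrt : √((m : ℝ) + 1) ≤ (m : ℝ) + 1 := Real.sqrt_le_self_iff.2 (by simp)
  calc ‖(m : ℝ) ^ k * (√((m : ℝ) + 1) * c (m + 1))‖
      = (m : ℝ) ^ k * √((m : ℝ) + 1) * |c (m + 1)| := by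
        rw [← mul_assoc, norm_mul, Real.norm_of_nonneg (by positivity), Real.norm_eq_abs]
    _ ≤ ((m : ℝ) + 1) ^ k * ((m : ℝ) + 1) * |c (m + 1)| := by
        gcongr
        linarith
    _ = |(m : ℝ) + 1| ^ (k + 1) * |c (m + 1)| := by
        rw [pow_succ, abs_of_nonneg (by positivity : (0 : ℝ) ≤ m + 1)]

lemma RapidDecay.coeffDeriv_iterate (hc : RapidDecay c) (n : ℕ) :
    RapidDecay (_root_.coeffDeriv^[n] c) := by
  induction n with
  | zero => exact hc
  | succ n ih =>
    rw [Function.iterate_succ_apply']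
    exact ih.coeffDeriv

lemma RapidDecay.summable_abs (hc : RapidDecay c) : Summable fun m => |c m| := by
  have hO := (Asymptotics.superpolynomialDecay_iff_isBigO c tendsto_natCast_atTop_atTop).1 hc (-2)
  refine (summable_of_isBigO_nat ?_ hO).abs
  simp

lemma RapidDecay.summable_succ_mul_abs (hc : RapidDecay c) :
    Summable fun m : ℕ => ((m : ℝ) + 1) * |c m| := by
  have hsucc : RapidDecay fun m : ℕ => ((m : ℝ) + 1) * c m :=
    (hc.param_mul.add hc).congr fun m => by simp [add_mul]
  refine hsucc.summable_abs.congr fun m => ?_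
  rw [abs_mul, abs_of_nonneg (by positivity)]

lemma iteratedDeriv_hermiteSeries (hc : RapidDecay c) (n : ℕ) :
    iteratedDeriv n (hermiteSeries c) = hermiteSeries (coeffDeriv^[n] c) := by
  induction n with
  | zero => simp
  | succ n ih =>
    ext x
    rw [iteratedDeriv_succ, ih, Function.iterate_succ_apply']
    exact (hasDerivAt_hermiteSeries (hc.coeffDeriv_iterate n).summable_succ_mul_abs x).deriv

lemma contDiff_hermiteSeries (hc : RapidDecay c) (n : ℕ) : ContDiff ℝ n (hermiteSeries c) := by
  refine contDiff_of_differentiable_iteratedDeriv fun k _ x => ?_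
  rw [iteratedDeriv_hermiteSeries hc]
  exact (hasDerivAt_hermiteSeries
    (hc.coeffDeriv_iterate k).summable_succ_mul_abs x).differentiableAt

lemma coeffDeriv_iterate_apply (c : ℕ → ℝ) (n m : ℕ) :
    coeffDeriv^[n] c m = √((m + 1).ascFactorial n : ℝ) * c (m + n) := by
  induction n generalizing m with
  | zero => simp
  | succ n ih =>
    have hasc : ((m + 1).ascFactorial (n + 1) : ℝ) =
        ((m : ℝ) + 1) * ((m + 1 + 1).ascFactorial n : ℝ) := by
      rw [Nat.ascFactorial_succ, ← Nat.succ_ascFactorial]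
      push_cast
      rfl
    rw [Function.iterate_succ_apply', coeffDeriv, ih, ← mul_assoc, ← Real.sqrt_mul (by positivity),
      hasc, add_right_comm m 1 n, ← add_assoc]

lemma succ_pow_mul_abs_le_abs_coeffDeriv_iterate (c : ℕ → ℝ) (k m : ℕ) :
    ((m : ℝ) + 1) ^ k * |c (m + 2 * k)| ≤ |coeffDeriv^[2 * k] c m| := by
  rw [coeffDeriv_iterate_apply, abs_mul, abs_of_nonneg (Real.sqrt_nonneg _)]
  gcongr
  refine Real.le_sqrt_of_sq_le ?_
  rw [← pow_mul, mul_comm k]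
  exact_mod_cast Nat.pow_succ_le_ascFactorial (m + 1) (2 * k)

lemma rapidDecay_of_bounded_coeffDeriv_iterate
    (h : ∀ n, ∃ C, ∀ m, |coeffDeriv^[n] c m| ≤ C) : RapidDecay c := by
  refine (Asymptotics.superpolynomialDecay_iff_abs_isBoundedUnder c
    tendsto_natCast_atTop_atTop).2 fun k => ?_
  obtain ⟨C, hC⟩ := h (2 * k)
  refine ⟨(2 * k + 1) ^ k * C, eventually_map.2 ?_⟩
  filter_upwards [eventually_ge_atTop (2 * k)] with m hm
  obtain ⟨j, rfl⟩ := Nat.exists_eq_add_of_le' hm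
  have hindex : ((j + 2 * k : ℕ) : ℝ) ≤ (2 * k + 1) * (j + 1) := by
    push_cast
    nlinarith [(by positivity : (0 : ℝ) ≤ k * j)]
  calc |((j + 2 * k : ℕ) : ℝ) ^ k * c (j + 2 * k)|
      = ((j + 2 * k : ℕ) : ℝ) ^ k * |c (j + 2 * k)| := by
        rw [abs_mul, abs_of_nonneg (by positivity)]
    _ ≤ ((2 * k + 1) * (j + 1)) ^ k * |c (j + 2 * k)| := by gcongr
    _ = (2 * k + 1) ^ k * ((j + 1) ^ k * |c (j + 2 * k)|) := by rw [mul_pow, mul_assoc]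
    _ ≤ (2 * k + 1) ^ k * C := by
        gcongr
        exact (succ_pow_mul_abs_le_abs_coeffDeriv_iterate c k j).trans (hC j)

end RapidDecay

section SmoothFunctions

variable {G : ℝ → ℝ}

lemma hermiteCoeff_deriv (hG : Differentiable ℝ G) (hL : MemLp G 2 π₁)
    (hL' : MemLp (deriv G) 2 π₁) : hermiteCoeff (deriv G) = coeffDeriv (hermiteCoeff G) := by
  ext m
  rw [coeffDeriv, hermiteCoeff, hermiteCoeff, sqrt_factorial_succ,
    integral_mul_He_succ (fun x => (hG x).hasDerivAt) hL hL']
  field_simp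

lemma hermiteCoeff_iteratedDeriv (hG : ∀ n : ℕ, ContDiff ℝ n G)
    (hL : ∀ n, MemLp (iteratedDeriv n G) 2 π₁) (n : ℕ) :
    hermiteCoeff (iteratedDeriv n G) = coeffDeriv^[n] (hermiteCoeff G) := by
  induction n with
  | zero => simp
  | succ n ih =>
    have hdiff : Differentiable ℝ (iteratedDeriv n G) :=
      (hG (n + 1)).differentiable_iteratedDeriv n (by exact_mod_cast n.lt_succ_self)
    have hL' := hL (n + 1)
    rw [iteratedDeriv_succ] at hL' ⊢
    rw [hermiteCoeff_deriv hdiff (hL n) hL', ih, Function.iterate_succ_apply']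

lemma rapidDecay_hermiteCoeff (hG : ∀ n : ℕ, ContDiff ℝ n G)
    (hL : ∀ n, MemLp (iteratedDeriv n G) 2 π₁) : RapidDecay (hermiteCoeff G) := by
  refine rapidDecay_of_bounded_coeffDeriv_iterate fun n => ⟨‖(hL n).toLp‖, fun m => ?_⟩
  rw [← hermiteCoeff_iteratedDeriv hG hL]
  exact abs_hermiteCoeff_le_norm (hL n) m

end SmoothFunctions

theorem stmt3 (F : ℝ → ℝ) (hmeas : Measurable F) (hF : MemLp F 2 stdGaussian) :
    (∀ k : ℕ, Tendsto (fun m : ℕ => (m : ℝ) ^ k * hermiteCoeff F m) atTop (nhds 0)) ↔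
    (∃ G : ℝ → ℝ, (∀ n : ℕ, ContDiff ℝ n G) ∧ F =ᵐ[_root_.stdGaussian] G ∧
      ∀ n : ℕ, MemLp (iteratedDeriv n G) 2 stdGaussian) := by
  constructor
  · intro (hdecay : RapidDecay (hermiteCoeff F))
    refine ⟨hermiteSeries (hermiteCoeff F), contDiff_hermiteSeries hdecay,
      ae_eq_hermiteSeries_hermiteCoeff hF hdecay.summable_abs, fun n => ?_⟩
    rw [iteratedDeriv_hermiteSeries hdecay]
    exact memLp_hermiteSeries (hdecay.coeffDeriv_iterate n).summable_abs
  · rintro ⟨G, hsmooth, hFG, hL⟩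
    rw [hermiteCoeff_congr_ae hFG]
    exact rapidDecay_hermiteCoeff hsmooth hL
end

section
/- Let κ ∈ (0, 1/4), k ∈ ℕ, and let F : ℝ → ℝ be k-times continuously differentiable such that, for every ℓ ≤ k, sup_{x ∈ ℝ} |F^(ℓ)(x)| e^{-κ x²} < ∞ and |F^(ℓ)(x)| e^{-κ x²} → 0 as |x| → ∞. Then there exists a sequence (P_M)_{M ≥ 1} of real polynomial functions such that for every ℓ ≤ k, sup_{x ∈ ℝ} |F^(ℓ)(x) − P_M^(ℓ)(x)| e^{-κ x²} → 0 as M → ∞. -/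
open Filter

/-!
Exponentials `x ↦ exp (z * x)` are limits of their Taylor polynomials in the norm
`sup ‖f x‖ * |w x|` of any weight `w` decaying faster than every exponential. Hence so are
trigonometric polynomials of every period and, by their density, continuous periodic functions.
A compactly supported function differs from its periodization only far out, where the weight is
small, and a function with `w * f → 0` at infinity is a limit of compactly supported ones.

For a Gaussian weight the derivatives are handled by approximating the highest one and integrating:
since `t ^ 2 ≤ t * x` for `0 ≤ t ≤ x`, the weighted norm of a primitive vanishing at `0` is at most
`1 / √κ` times that of the function.
-/

open scoped Polynomial Nat Topology

lemma pow_mul_norm_exp_sub_sum_le {c : ℝ} (hc : 1 ≤ c) (z : ℂ) (n : ℕ) :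
    c ^ n * ‖Complex.exp z - ∑ m ∈ Finset.range n, z ^ m / (m ! : ℂ)‖ ≤ Real.exp (c * ‖z‖) := by
  have hasSum_tail (r : ℝ) : HasSum (fun m ↦ r ^ (m + n) / (m + n) !)
      (Real.exp r - ∑ m ∈ Finset.range n, r ^ m / m !) := by
    rw [hasSum_nat_add_iff' n (f := fun m ↦ r ^ m / m !), Real.exp_eq_exp_ℝ]
    exact NormedSpace.expSeries_div_hasSum_exp r
  calc c ^ n * ‖Complex.exp z - ∑ m ∈ Finset.range n, z ^ m / (m ! : ℂ)‖
      ≤ c ^ n * (Real.exp ‖z‖ - ∑ m ∈ Finset.range n, ‖z‖ ^ m / m !) := by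
        gcongr
        exact Complex.norm_exp_sub_sum_le_exp_norm_sub_sum z n
    _ ≤ Real.exp (c * ‖z‖) - ∑ m ∈ Finset.range n, (c * ‖z‖) ^ m / m ! := by
        refine hasSum_le (fun m ↦ ?_) ((hasSum_tail ‖z‖).mul_left (c ^ n)) (hasSum_tail (c * ‖z‖))
        rw [mul_pow, mul_div_assoc]
        gcongr
        exact Nat.le_add_left n m
    _ ≤ Real.exp (c * ‖z‖) := sub_le_self _ (by positivity)

/-- The functions `ℝ → ℂ` that are limits of complex polynomials in the weighted uniform norm
`sup ‖w x • f x‖`; neither these functions nor the polynomials need have finite norm. -/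
def weightedPolynomialClosure (w : ℝ → ℝ) : Submodule ℂ (ℝ → ℂ) where
  carrier := {f | ∀ ε > 0, ∃ p : ℂ[X], ∀ x, ‖w x • (f x - p.eval (x : ℂ))‖ ≤ ε}
  zero_mem' ε hε := ⟨0, fun x ↦ by simpa using hε.le⟩
  add_mem' {f g} hf hg ε hε := by
    obtain ⟨p, hp⟩ := hf (ε / 2) (half_pos hε)
    obtain ⟨q, hq⟩ := hg (ε / 2) (half_pos hε)
    refine ⟨p + q, fun x ↦ ?_⟩
    rw [Pi.add_apply, Polynomial.eval_add, add_sub_add_comm, smul_add]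
    exact (norm_add_le_of_le (hp x) (hq x)).trans_eq (add_halves ε)
  smul_mem' c f hf ε hε := by
    obtain ⟨p, hp⟩ := hf (ε / (‖c‖ + 1)) (by positivity)
    refine ⟨c • p, fun x ↦ ?_⟩
    rw [Pi.smul_apply, Polynomial.eval_smul, ← smul_sub, smul_comm, norm_smul]
    calc ‖c‖ * ‖w x • (f x - p.eval (x : ℂ))‖ ≤ (‖c‖ + 1) * (ε / (‖c‖ + 1)) := by
          gcongr
          · exact le_add_of_nonneg_right zero_le_one
          · exact hp x
      _ = ε := mul_div_cancel₀ ε (by positivity)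

/-- The weight `w` decays at infinity faster than every exponential. The bound is imposed on all
of `ℝ`, so that `w` is also bounded. -/
def SuperexponentialDecay (w : ℝ → ℝ) : Prop :=
  ∀ c : ℝ, ∃ C, ∀ x, |w x| * Real.exp (c * |x|) ≤ C

section Weight

variable {w : ℝ → ℝ}

lemma SuperexponentialDecay.exists_abs_le (hw : SuperexponentialDecay w) :
    ∃ C, ∀ x, |w x| ≤ C := by
  simpa using hw 0

lemma SuperexponentialDecay.tendsto_zero (hw : SuperexponentialDecay w) :
    Tendsto w (cocompact ℝ) (𝓝 0) := by
  obtain ⟨C, hC⟩ := hw 1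
  have hexp : Tendsto (fun x : ℝ ↦ C * Real.exp (-|x|)) (cocompact ℝ) (𝓝 0) := by
    simpa using (Real.tendsto_exp_neg_atTop_nhds_zero.comp
      (tendsto_norm_cocompact_atTop (E := ℝ))).const_mul C
  refine squeeze_zero_norm (fun x ↦ ?_) hexp
  rw [Real.exp_neg, ← div_eq_mul_inv, le_div_iff₀ (Real.exp_pos _)]
  simpa using hC x

lemma mem_weightedPolynomialClosure_of_forall_exists_near {f : ℝ → ℂ}
    (h : ∀ ε > 0, ∃ g ∈ weightedPolynomialClosure w, ∀ x, ‖w x • (f x - g x)‖ ≤ ε) :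
    f ∈ weightedPolynomialClosure w := by
  intro ε hε
  obtain ⟨g, hg, hfg⟩ := h (ε / 2) (half_pos hε)
  obtain ⟨p, hp⟩ := hg (ε / 2) (half_pos hε)
  refine ⟨p, fun x ↦ ?_⟩
  rw [← sub_add_sub_cancel (f x) (g x), smul_add]
  exact (norm_add_le_of_le (hfg x) (hp x)).trans_eq (add_halves ε)

lemma exp_mul_mem_weightedPolynomialClosure (hw : SuperexponentialDecay w) (z : ℂ) :
    (fun x : ℝ ↦ Complex.exp (z * x)) ∈ weightedPolynomialClosure w := by
  intro ε hε
  obtain ⟨C, hC⟩ := hw (2 * ‖z‖)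
  obtain ⟨n, hn⟩ : ∃ n : ℕ, C / ε < 2 ^ n := pow_unbounded_of_one_lt _ one_lt_two
  refine ⟨∑ m ∈ Finset.range n, Polynomial.monomial m (z ^ m / m !), fun x ↦ ?_⟩
  have eval_taylor : (∑ m ∈ Finset.range n, Polynomial.monomial m (z ^ m / (m ! : ℂ))).eval (x : ℂ)
      = ∑ m ∈ Finset.range n, (z * x) ^ m / m ! := by
    simp only [Polynomial.eval_finsetSum, Polynomial.eval_monomial, mul_pow, div_mul_eq_mul_div]
  rw [eval_taylor, norm_smul, Real.norm_eq_abs]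
  refine le_of_mul_le_mul_left ?_ (pow_pos (two_pos (α := ℝ)) n)
  calc 2 ^ n * (|w x| * ‖Complex.exp (z * x) - ∑ m ∈ Finset.range n, (z * x) ^ m / (m ! : ℂ)‖)
      = |w x| * (2 ^ n * ‖Complex.exp (z * x) - ∑ m ∈ Finset.range n, (z * x) ^ m / (m ! : ℂ)‖) :=
        mul_left_comm ..
    _ ≤ |w x| * Real.exp (2 * ‖z * x‖) := by
        gcongr
        exact pow_mul_norm_exp_sub_sum_le one_le_two _ n
    _ ≤ C := by simpa [mul_assoc] using hC x
    _ ≤ 2 ^ n * ε := ((div_lt_iff₀ hε).1 hn).le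

lemma trigonometric_mem_weightedPolynomialClosure (hw : SuperexponentialDecay w) {T : ℝ}
    {f : C(AddCircle T, ℂ)} (hf : f ∈ Submodule.span ℂ (Set.range (fourier (T := T)))) :
    (fun x : ℝ ↦ f x) ∈ weightedPolynomialClosure w := by
  induction hf using Submodule.span_induction with
  | mem f hf =>
    obtain ⟨n, rfl⟩ := hf
    convert exp_mul_mem_weightedPolynomialClosure hw (2 * Real.pi * Complex.I * n / T) using 2
    rw [fourier_coe_apply, div_mul_eq_mul_div]
  | zero => exact zero_mem _
  | add f g _ _ hf hg => exact add_mem hf hg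
  | smul c f _ hf => exact Submodule.smul_mem _ c hf

lemma periodic_mem_weightedPolynomialClosure (hw : SuperexponentialDecay w) {T : ℝ}
    [Fact (0 < T)] (f : C(AddCircle T, ℂ)) :
    (fun x : ℝ ↦ f x) ∈ weightedPolynomialClosure w := by
  refine mem_weightedPolynomialClosure_of_forall_exists_near fun ε hε ↦ ?_
  obtain ⟨C, hC⟩ := hw.exists_abs_le
  have hC₀ : 0 ≤ C := (abs_nonneg _).trans (hC 0)
  have hf : f ∈ (Submodule.span ℂ (Set.range (fourier (T := T)))).topologicalClosure :=
    span_fourier_closure_eq_top.ge Submodule.mem_top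
  obtain ⟨g, hg, hfg⟩ := Metric.mem_closure_iff.1 hf (ε / (C + 1)) (by positivity)
  refine ⟨_, trigonometric_mem_weightedPolynomialClosure hw hg, fun x ↦ ?_⟩
  rw [norm_smul, ← dist_eq_norm]
  calc |w x| * dist (f x) (g x) ≤ (C + 1) * (ε / (C + 1)) := by
        gcongr
        · exact (hC x).trans (le_add_of_nonneg_right zero_le_one)
        · exact (ContinuousMap.dist_apply_le_dist (x : AddCircle T)).trans hfg.le
    _ = ε := mul_div_cancel₀ ε (by positivity)

lemma exists_continuousMap_addCircle_eq_of_abs_lt {X : Type*} [TopologicalSpace X] {f : ℝ → X}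
    (hf : Continuous f) {S : ℝ} [Fact (0 < 2 * S)] (hS : f (-S) = f S) :
    ∃ g : C(AddCircle (2 * S), X),
      (∀ x : ℝ, |x| < S → g x = f x) ∧ Set.range g ⊆ Set.range f := by
  have right_endpoint : -S + 2 * S = S := by ring
  have hcont : Continuous (AddCircle.liftIco (2 * S) (-S) f) :=
    AddCircle.liftIco_continuous (by rw [right_endpoint, hS]) hf.continuousOn
  refine ⟨⟨_, hcont⟩, fun x hx ↦ AddCircle.liftIco_coe_apply ?_, ?_⟩
  · rw [right_endpoint]
    exact ⟨(abs_lt.1 hx).1.le, (abs_lt.1 hx).2⟩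
  · rintro _ ⟨y, rfl⟩
    exact ⟨_, rfl⟩

lemma mem_weightedPolynomialClosure_of_hasCompactSupport (hw : SuperexponentialDecay w)
    {f : ℝ → ℂ} (hf : Continuous f) (hsupp : HasCompactSupport f) :
    f ∈ weightedPolynomialClosure w := by
  refine mem_weightedPolynomialClosure_of_forall_exists_near fun ε hε ↦ ?_
  obtain ⟨B, hB⟩ := hf.bounded_above_of_compact_support hsupp
  obtain ⟨R, hR₀, hR⟩ := hsupp.exists_pos_le_norm
  have small_weight : ∀ᶠ x in cocompact ℝ, |w x| * B ≤ ε := by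
    have hlim := hw.tendsto_zero.abs.mul_const B
    rw [abs_zero, zero_mul] at hlim
    exact hlim.eventually_le_const hε
  obtain ⟨S, hRS, hS⟩ : ∃ S ≥ R, ∀ x, S ≤ |x| → |w x| * B ≤ ε := by
    rw [← Metric.cobounded_eq_cocompact, ← comap_norm_atTop, eventually_comap] at small_weight
    obtain ⟨S, hS⟩ := eventually_atTop.1 small_weight
    exact ⟨max R S, le_max_left _ _, fun x hx ↦ hS _ ((le_max_right _ _).trans hx) x rfl⟩
  have hS₀ : 0 < S := hR₀.trans_le hRS
  have : Fact (0 < 2 * S) := ⟨by positivity⟩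
  have f_eq_zero (x : ℝ) (hx : S ≤ |x|) : f x = 0 := hR x (hRS.trans hx)
  obtain ⟨g, hgf, hg⟩ := exists_continuousMap_addCircle_eq_of_abs_lt hf (S := S)
    (by rw [f_eq_zero S (le_abs_self S), f_eq_zero (-S) (by simpa using le_abs_self S)])
  refine ⟨_, periodic_mem_weightedPolynomialClosure hw g, fun x ↦ ?_⟩
  rcases lt_or_ge |x| S with hx | hx
  · simpa [hgf x hx] using hε.le
  · obtain ⟨y, hy⟩ := hg ⟨x, rfl⟩
    rw [f_eq_zero x hx, zero_sub, smul_neg, norm_neg, norm_smul, ← hy]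
    exact (mul_le_mul_of_nonneg_left (hB y) (norm_nonneg _)).trans (hS x hx)

theorem mem_weightedPolynomialClosure_of_tendsto_zero (hw : SuperexponentialDecay w)
    {f : ℝ → ℂ} (hf : Continuous f)
    (hlim : Tendsto (fun x ↦ ‖w x • f x‖) (cocompact ℝ) (𝓝 0)) :
    f ∈ weightedPolynomialClosure w := by
  refine mem_weightedPolynomialClosure_of_forall_exists_near fun ε hε ↦ ?_
  obtain ⟨K, hK, hKε⟩ := mem_cocompact.1 (hlim.eventually_le_const hε)
  obtain ⟨χ, hχK, -, hχsupp, hχ⟩ :=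
    exists_continuous_one_zero_of_isCompact hK isClosed_empty (Set.disjoint_empty K)
  refine ⟨fun x ↦ χ x • f x, mem_weightedPolynomialClosure_of_hasCompactSupport hw
    (χ.continuous.smul hf) hχsupp.smul_right, fun x ↦ ?_⟩
  by_cases hx : x ∈ K
  · simpa [hχK hx] using hε.le
  · have cutoff : ‖1 - χ x‖ ≤ 1 := by
      rw [Real.norm_of_nonneg (sub_nonneg.2 (hχ x).2)]
      exact sub_le_self _ (hχ x).1
    calc ‖w x • (f x - χ x • f x)‖ = ‖1 - χ x‖ * ‖w x • f x‖ := by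
          rw [← norm_smul, smul_comm, sub_smul, one_smul]
      _ ≤ ‖w x • f x‖ := mul_le_of_le_one_left (norm_nonneg _) cutoff
      _ ≤ ε := hKε hx

lemma exists_real_polynomial_eval_eq_re (p : ℂ[X]) :
    ∃ q : ℝ[X], ∀ x : ℝ, q.eval x = (p.eval (x : ℂ)).re := by
  induction p using Polynomial.induction_on' with
  | add p₁ p₂ h₁ h₂ =>
    obtain ⟨q₁, hq₁⟩ := h₁
    obtain ⟨q₂, hq₂⟩ := h₂
    exact ⟨q₁ + q₂, fun x ↦ by simp [hq₁, hq₂]⟩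
  | monomial n c =>
    refine ⟨Polynomial.monomial n c.re, fun x ↦ ?_⟩
    rw [Polynomial.eval_monomial, Polynomial.eval_monomial, ← Complex.ofReal_pow,
      Complex.re_mul_ofReal]

theorem exists_polynomial_abs_sub_mul_weight_le (hw : SuperexponentialDecay w)
    {f : ℝ → ℝ} (hf : Continuous f)
    (hlim : Tendsto (fun x ↦ |f x| * |w x|) (cocompact ℝ) (𝓝 0)) {ε : ℝ} (hε : 0 < ε) :
    ∃ p : ℝ[X], ∀ x, |f x - p.eval x| * |w x| ≤ ε := by
  have hmem : (fun x ↦ (f x : ℂ)) ∈ weightedPolynomialClosure w :=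
    mem_weightedPolynomialClosure_of_tendsto_zero hw (by fun_prop)
      (by simpa [norm_smul, mul_comm] using hlim)
  obtain ⟨p, hp⟩ := hmem ε hε
  obtain ⟨q, hq⟩ := exists_real_polynomial_eval_eq_re p
  refine ⟨q, fun x ↦ ?_⟩
  calc |f x - q.eval x| * |w x| = |((f x : ℂ) - p.eval (x : ℂ)).re| * |w x| := by simp [hq]
    _ ≤ ‖(f x : ℂ) - p.eval (x : ℂ)‖ * |w x| := by
        gcongr
        exact Complex.abs_re_le_norm _
    _ ≤ ε := by simpa [norm_smul, mul_comm] using hp x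

end Weight

lemma exists_polynomial_derivative_eq_eval_eq {K : Type*} [Field K] [CharZero K] (q : K[X])
    (a c : K) : ∃ p : K[X], p.derivative = q ∧ p.eval a = c := by
  obtain ⟨r, rfl⟩ : ∃ r : K[X], r.derivative = q := by
    induction q using Polynomial.induction_on' with
    | add q₁ q₂ h₁ h₂ =>
      obtain ⟨r₁, rfl⟩ := h₁
      obtain ⟨r₂, rfl⟩ := h₂
      exact ⟨r₁ + r₂, Polynomial.derivative_add⟩
    | monomial n b =>
      refine ⟨Polynomial.monomial (n + 1) (b / (n + 1 : ℕ)), ?_⟩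
      rw [Polynomial.derivative_monomial, Nat.add_sub_cancel,
        div_mul_cancel₀ _ (Nat.cast_ne_zero.2 n.succ_ne_zero)]
  exact ⟨r + Polynomial.C (c - r.eval a), by simp, by simp⟩

lemma iteratedDeriv_polynomial_eval {𝕜 : Type*} [NontriviallyNormedField 𝕜] (p : 𝕜[X]) (n : ℕ) :
    iteratedDeriv n (fun x ↦ p.eval x) = fun x ↦ (Polynomial.derivative^[n] p).eval x := by
  induction n generalizing p with
  | zero => simp
  | succ n ih =>
    rw [iteratedDeriv_succ', Function.iterate_succ_apply, ← ih]
    congr 1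
    exact funext fun _ ↦ p.deriv

section Gaussian

variable {κ : ℝ}

lemma superexponentialDecay_gaussian (hκ : 0 < κ) :
    SuperexponentialDecay fun x ↦ Real.exp (-κ * x ^ 2) := by
  refine fun c ↦ ⟨Real.exp (c ^ 2 / (4 * κ)), fun x ↦ ?_⟩
  rw [Real.abs_exp, ← Real.exp_add, Real.exp_le_exp, le_div_iff₀ (by positivity), ← sq_abs x]
  linarith [sq_nonneg (2 * κ * |x| - c)]

lemma one_sub_exp_neg_le_sqrt {u : ℝ} (hu : 0 ≤ u) : 1 - Real.exp (-u) ≤ √u := by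
  have nonneg : 0 ≤ 1 - Real.exp (-u) := sub_nonneg.2 (Real.exp_le_one_iff.2 (neg_nonpos.2 hu))
  refine Real.le_sqrt_of_sq_le ?_
  calc (1 - Real.exp (-u)) ^ 2 ≤ 1 - Real.exp (-u) :=
        pow_le_of_le_one nonneg (sub_le_self _ (Real.exp_pos _).le) two_ne_zero
    _ ≤ u := sub_le_comm.1 (Real.one_sub_le_exp_neg u)

variable {E : Type*} [NormedAddCommGroup E] [NormedSpace ℝ E] {G G' : ℝ → E} {C : ℝ}

lemma norm_le_of_norm_deriv_le_exp_sq (hκ : 0 < κ) (hG : ∀ t, HasDerivAt G (G' t) t)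
    (hG₀ : G 0 = 0) (hG' : ∀ t, ‖G' t‖ ≤ C * Real.exp (κ * t ^ 2)) {x : ℝ} (hx : 0 < x) :
    ‖G x‖ ≤ C * ((Real.exp (κ * x ^ 2) - 1) / (κ * x)) := by
  have hC : 0 ≤ C := by simpa using (norm_nonneg _).trans (hG' 0)
  have barrier_deriv (t : ℝ) : HasDerivAt
      (fun t ↦ C * ((Real.exp (κ * x * t) - 1) / (κ * x))) (C * Real.exp (κ * x * t)) t := by
    have := ((((hasDerivAt_id t).const_mul (κ * x)).exp.sub_const 1).div_const (κ * x)).const_mul C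
    simpa [mul_div_cancel_right₀, hκ.ne', hx.ne'] using this
  have bound := image_norm_le_of_norm_deriv_right_le_deriv_boundary (a := 0) (b := x)
    (fun t _ ↦ (hG t).continuousAt.continuousWithinAt) (fun t _ ↦ (hG t).hasDerivWithinAt)
    (by simp [hG₀]) barrier_deriv
    (fun t ht ↦ (hG' t).trans (by
      rw [sq, mul_assoc κ x t]
      have := ht.1
      gcongr
      exact ht.2.le))
    (Set.right_mem_Icc.2 hx.le)
  rwa [mul_assoc κ x x, ← sq] at bound

lemma norm_mul_gaussian_le_of_norm_deriv_mul_gaussian_le_of_pos (hκ : 0 < κ)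
    (hG : ∀ t, HasDerivAt G (G' t) t) (hG₀ : G 0 = 0)
    (hG' : ∀ t, ‖G' t‖ * Real.exp (-κ * t ^ 2) ≤ C) {x : ℝ} (hx : 0 < x) :
    ‖G x‖ * Real.exp (-κ * x ^ 2) ≤ C / √κ := by
  have hC : 0 ≤ C := (by positivity : 0 ≤ ‖G' 0‖ * Real.exp (-κ * 0 ^ 2)).trans (hG' 0)
  have norm_G' (t : ℝ) : ‖G' t‖ ≤ C * Real.exp (κ * t ^ 2) := by
    have := hG' t
    rwa [neg_mul, Real.exp_neg, ← div_eq_mul_inv, div_le_iff₀ (Real.exp_pos _)] at this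
  have exp_mul : Real.exp (κ * x ^ 2) * Real.exp (-(κ * x ^ 2)) = 1 := by
    rw [← Real.exp_add, add_neg_cancel, Real.exp_zero]
  rw [neg_mul]
  calc ‖G x‖ * Real.exp (-(κ * x ^ 2))
      ≤ C * ((Real.exp (κ * x ^ 2) - 1) / (κ * x)) * Real.exp (-(κ * x ^ 2)) := by
        gcongr
        exact norm_le_of_norm_deriv_le_exp_sq hκ hG hG₀ norm_G' hx
    _ = C * ((1 - Real.exp (-(κ * x ^ 2))) / (κ * x)) := by
        rw [mul_assoc, div_mul_eq_mul_div, sub_mul, exp_mul, one_mul]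
    _ ≤ C * (√(κ * x ^ 2) / (κ * x)) := by
        gcongr
        exact one_sub_exp_neg_le_sqrt (by positivity)
    _ = C / √κ := by
        rw [Real.sqrt_mul hκ.le, Real.sqrt_sq hx.le, mul_div_mul_right _ _ hx.ne',
          Real.sqrt_div_self', mul_one_div]

lemma norm_mul_gaussian_le_of_norm_deriv_mul_gaussian_le (hκ : 0 < κ)
    (hG : ∀ t, HasDerivAt G (G' t) t) (hG₀ : G 0 = 0)
    (hG' : ∀ t, ‖G' t‖ * Real.exp (-κ * t ^ 2) ≤ C) (x : ℝ) :
    ‖G x‖ * Real.exp (-κ * x ^ 2) ≤ C / √κ := by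
  rcases lt_trichotomy x 0 with hx | rfl | hx
  · have reflected_deriv (t : ℝ) : HasDerivAt (fun t ↦ G (-t)) (-G' (-t)) t := by
      simpa [Function.comp_def] using (hG (-t)).scomp t (hasDerivAt_neg t)
    simpa using norm_mul_gaussian_le_of_norm_deriv_mul_gaussian_le_of_pos hκ reflected_deriv
      (by simpa using hG₀) (fun t ↦ by simpa using hG' (-t)) (neg_pos.2 hx)
  · have hC : 0 ≤ C := (by positivity : 0 ≤ ‖G' 0‖ * Real.exp (-κ * 0 ^ 2)).trans (hG' 0)
    rw [hG₀, norm_zero, zero_mul]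
    positivity
  · exact norm_mul_gaussian_le_of_norm_deriv_mul_gaussian_le_of_pos hκ hG hG₀ hG' hx

lemma exists_polynomial_iterate_derivative_near (hκ : 0 < κ) {k : ℕ} {F : ℝ → ℝ}
    (hF : ContDiff ℝ k F)
    (hdec : ∀ ℓ ≤ k, Tendsto (fun x ↦ |iteratedDeriv ℓ F x| * Real.exp (-κ * x ^ 2))
      (cocompact ℝ) (𝓝 0)) {ε : ℝ} (hε : 0 < ε) :
    ∃ p : ℝ[X], ∀ ℓ ≤ k, ∀ x,
      |iteratedDeriv ℓ F x - (Polynomial.derivative^[ℓ] p).eval x| * Real.exp (-κ * x ^ 2) ≤ ε := by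
  induction k generalizing F ε with
  | zero =>
    obtain ⟨p, hp⟩ := exists_polynomial_abs_sub_mul_weight_le (superexponentialDecay_gaussian hκ)
      hF.continuous (by simpa using hdec 0 le_rfl) hε
    refine ⟨p, fun ℓ hℓ x ↦ ?_⟩
    obtain rfl := Nat.le_zero.1 hℓ
    simpa using hp x
  | succ k ih =>
    rw [Nat.cast_succ] at hF
    obtain ⟨hdiff, -, hF'⟩ := contDiff_succ_iff_deriv.1 hF
    have hdec' (ℓ : ℕ) (hℓ : ℓ ≤ k) : Tendsto
        (fun x ↦ |iteratedDeriv ℓ (deriv F) x| * Real.exp (-κ * x ^ 2)) (cocompact ℝ) (𝓝 0) := by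
      simpa only [iteratedDeriv_succ'] using hdec (ℓ + 1) (Nat.succ_le_succ hℓ)
    obtain ⟨q, hq⟩ := ih hF' hdec' (ε := min ε (ε * √κ)) (by positivity)
    obtain ⟨p, rfl, hp₀⟩ := exists_polynomial_derivative_eq_eval_eq q 0 (F 0)
    refine ⟨p, fun ℓ hℓ x ↦ ?_⟩
    cases ℓ with
    | succ ℓ =>
      rw [iteratedDeriv_succ', Function.iterate_succ_apply]
      exact (hq ℓ (Nat.le_of_succ_le_succ hℓ) x).trans (min_le_left _ _)
    | zero =>
      have primitive_bound := norm_mul_gaussian_le_of_norm_deriv_mul_gaussian_le hκ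
        (fun t ↦ (hdiff t).hasDerivAt.sub (p.hasDerivAt t)) (by simp [hp₀])
        (fun t ↦ (hq 0 k.zero_le t).trans (min_le_right _ _)) x
      rw [mul_div_cancel_right₀ _ (Real.sqrt_pos.2 hκ).ne'] at primitive_bound
      exact primitive_bound

end Gaussian

theorem stmt9_general {κ : ℝ} (hκ : 0 < κ) (k : ℕ) (F : ℝ → ℝ) (hF : ContDiff ℝ k F)
    (hdec : ∀ ℓ ≤ k,
      Tendsto (fun x : ℝ => |iteratedDeriv ℓ F x| * Real.exp (-κ * x ^ 2))
        (Filter.cocompact ℝ) (nhds 0)) :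
    ∃ P : ℕ → Polynomial ℝ, ∀ ℓ ≤ k, ∀ η > (0 : ℝ), ∃ M₀ : ℕ, ∀ M ≥ M₀, ∀ x : ℝ,
      |iteratedDeriv ℓ F x - iteratedDeriv ℓ (fun y => (P M).eval y) x|
        * Real.exp (-κ * x ^ 2) ≤ η := by
  choose P hP using fun M : ℕ ↦
    exists_polynomial_iterate_derivative_near hκ hF hdec (Nat.one_div_pos_of_nat (n := M))
  refine ⟨P, fun ℓ hℓ η hη ↦ ?_⟩
  obtain ⟨M₀, hM₀⟩ := exists_nat_one_div_lt hη
  refine ⟨M₀, fun M hM x ↦ ?_⟩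
  rw [iteratedDeriv_polynomial_eval]
  exact (hP M ℓ hℓ x).trans ((Nat.one_div_le_one_div hM).trans hM₀.le)

theorem stmt9 (κ : ℝ) (hκ : κ ∈ Set.Ioo (0 : ℝ) (1 / 4)) (k : ℕ) (F : ℝ → ℝ)
    (hF : ContDiff ℝ k F)
    (hbdd : ∀ ℓ ≤ k, ∃ B : ℝ, ∀ x : ℝ, |iteratedDeriv ℓ F x| * Real.exp (-κ * x ^ 2) ≤ B)
    (hdec : ∀ ℓ ≤ k,
      Tendsto (fun x : ℝ => |iteratedDeriv ℓ F x| * Real.exp (-κ * x ^ 2))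
        (Filter.cocompact ℝ) (nhds 0)) :
    ∃ P : ℕ → Polynomial ℝ, ∀ ℓ ≤ k, ∀ η > (0 : ℝ), ∃ M₀ : ℕ, ∀ M ≥ M₀, ∀ x : ℝ,
      |iteratedDeriv ℓ F x - iteratedDeriv ℓ (fun y => (P M).eval y) x|
        * Real.exp (-κ * x ^ 2) ≤ η :=
  stmt9_general hκ.1 k F hF hdec
end

section
/- Let σ > 0 and let π_σ denote the Gaussian measure on ℝ with mean 0 and variance σ². There exists a constant C = C(σ) > 0 such that for every continuously differentiable function G : ℝ → ℝ with G ∈ L²(π_σ) and G' ∈ L²(π_σ), one has sup_{x ∈ ℝ} |G(x)| e^{-x²/(2σ²)} ≤ C · (‖G‖_{L²(π_σ)} + ‖G'‖_{L²(π_σ)}). -/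
open MeasureTheory ProbabilityTheory

/-- The Gaussian measure `π_σ` on `ℝ` with mean `0` and variance `σ²`. -/
noncomputable def gaussMeasure (σ : ℝ) : Measure ℝ := gaussianReal 0 ((σ ^ 2).toNNReal)

/-!
On a unit interval `I` containing `x`, averaging `G x = G s + ∫ t in s..x, G' t` over `s ∈ I`
gives `‖G x‖ ≤ ∫_I ‖G‖ + ∫_I ‖G'‖`, and Cauchy–Schwarz turns both terms into `L²` norms on `I`.
Placing `I` on the side of `x` towards the mean keeps the Gaussian density on `I` above a fixed
multiple of its value at `x`, so the `L²` norms on `I` are controlled by the Gaussian ones. This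
yields the bound even for the weight `exp (-x² / (4σ²))`, a multiple of the square root of the
density.
-/

open Set
open scoped ENNReal NNReal

section MeasureComparison

variable {α E : Type*} {mα : MeasurableSpace α} [NormedAddCommGroup E] {μ ν : Measure α}

lemma restrict_le_smul_withDensity {c : ℝ≥0∞} (hc : c ≠ ∞) {s : Set α} (hs : MeasurableSet s)
    {ρ : α → ℝ≥0∞} (hρ : ∀ t ∈ s, 1 ≤ c * ρ t) :
    μ.restrict s ≤ c • μ.withDensity ρ :=
  calc μ.restrict s
      = (μ.restrict s).withDensity 1 := withDensity_one.symm
    _ ≤ (μ.restrict s).withDensity (c • ρ) :=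
        withDensity_mono ((ae_restrict_iff' hs).2 (.of_forall hρ))
    _ = c • (μ.withDensity ρ).restrict s := by
        rw [withDensity_smul' c ρ hc, restrict_withDensity hs]
    _ ≤ c • μ.withDensity ρ := by
        gcongr
        exact Measure.restrict_le_self

lemma integral_norm_le_sqrt_integral_norm_sq [IsProbabilityMeasure ν] {f : α → E}
    (hf : MemLp f 2 ν) : ∫ t, ‖f t‖ ∂ν ≤ √(∫ t, ‖f t‖ ^ 2 ∂ν) := by
  refine Real.le_sqrt_of_sq_le (sub_nonneg.1 ?_)
  exact (variance_eq_sub hf.norm).subst (variance_nonneg (fun t ↦ ‖f t‖) ν)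

lemma integral_norm_le_of_measure_le_smul [IsProbabilityMeasure ν] {c : ℝ≥0∞} (hc : c ≠ ∞)
    (hνμ : ν ≤ c • μ) {f : α → E} (hf : MemLp f 2 μ) :
    ∫ t, ‖f t‖ ∂ν ≤ √c.toReal * √(∫ t, ‖f t‖ ^ 2 ∂μ) := by
  have sq_integral_le : ∫ t, ‖f t‖ ^ 2 ∂ν ≤ c.toReal * ∫ t, ‖f t‖ ^ 2 ∂μ :=
    calc ∫ t, ‖f t‖ ^ 2 ∂ν
        ≤ ∫ t, ‖f t‖ ^ 2 ∂(c • μ) :=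
          integral_mono_measure hνμ (.of_forall fun _ ↦ sq_nonneg _)
            (hf.norm.integrable_sq.smul_measure hc)
      _ = c.toReal * ∫ t, ‖f t‖ ^ 2 ∂μ := integral_smul_measure _ c
  calc ∫ t, ‖f t‖ ∂ν
      ≤ √(∫ t, ‖f t‖ ^ 2 ∂ν) :=
        integral_norm_le_sqrt_integral_norm_sq (hf.of_measure_le_smul hc hνμ)
    _ ≤ √(c.toReal * ∫ t, ‖f t‖ ^ 2 ∂μ) := Real.sqrt_le_sqrt sq_integral_le
    _ = √c.toReal * √(∫ t, ‖f t‖ ^ 2 ∂μ) := Real.sqrt_mul ENNReal.toReal_nonneg _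

end MeasureComparison

section Sobolev

variable {E : Type*} [NormedAddCommGroup E] [NormedSpace ℝ E] [CompleteSpace E]
  {f f' : ℝ → E} {a b x : ℝ}

lemma norm_sub_le_integral_norm_deriv (hderiv : ∀ t ∈ Icc a b, HasDerivAt f (f' t) t)
    (hf' : IntegrableOn f' (Ioc a b)) {s : ℝ} (hs : s ∈ Icc a b) (hx : x ∈ Icc a b) :
    ‖f x - f s‖ ≤ ∫ t in Ioc a b, ‖f' t‖ := by
  have uIcc_subset : uIcc s x ⊆ Icc a b := uIcc_subset_Icc hs hx
  have uIoc_subset : uIoc s x ⊆ Ioc a b :=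
    Ioc_subset_Ioc (le_min hs.1 hx.1) (max_le hs.2 hx.2)
  calc ‖f x - f s‖
      = ‖∫ t in s..x, f' t‖ := by
        rw [intervalIntegral.integral_eq_sub_of_hasDerivAt (fun t ht ↦ hderiv t (uIcc_subset ht))
          (intervalIntegrable_iff.2 (hf'.mono_set uIoc_subset))]
    _ ≤ ∫ t in uIoc s x, ‖f' t‖ := intervalIntegral.norm_integral_le_integral_norm_uIoc
    _ ≤ ∫ t in Ioc a b, ‖f' t‖ :=
        setIntegral_mono_set hf'.norm (.of_forall fun _ ↦ norm_nonneg _) uIoc_subset.eventuallyLE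

lemma mul_norm_le_integral_norm_add_integral_norm_deriv
    (hderiv : ∀ t ∈ Icc a b, HasDerivAt f (f' t) t) (hf' : IntegrableOn f' (Ioc a b))
    (hx : x ∈ Icc a b) :
    (b - a) * ‖f x‖ ≤ (∫ t in Ioc a b, ‖f t‖) + (b - a) * ∫ t in Ioc a b, ‖f' t‖ := by
  have hf : IntegrableOn f (Ioc a b) :=
    (HasDerivAt.continuousOn hderiv).integrableOn_Icc.mono_set Ioc_subset_Icc_self
  have norm_le (s : ℝ) (hs : s ∈ Ioc a b) : ‖f x‖ ≤ ‖f s‖ + ∫ t in Ioc a b, ‖f' t‖ :=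
    (norm_le_norm_add_norm_sub' _ _).trans <| by
      gcongr
      exact norm_sub_le_integral_norm_deriv hderiv hf' (Ioc_subset_Icc_self hs) hx
  have volume_real : volume.real (Ioc a b) = b - a := Real.volume_real_Ioc_of_le (hx.1.trans hx.2)
  have integral_le := setIntegral_mono_on (integrable_const _) (hf.norm.add (integrable_const _))
    measurableSet_Ioc norm_le
  simpa only [Pi.add_apply, integral_add hf.norm (integrable_const _), setIntegral_const,
    volume_real, smul_eq_mul] using integral_le

lemma norm_le_of_restrict_le_smul {μ : Measure ℝ} {c : ℝ≥0∞} (hc : c ≠ ∞)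
    (hμ : volume.restrict (Ioc a (a + 1)) ≤ c • μ)
    (hderiv : ∀ t ∈ Icc a (a + 1), HasDerivAt f (f' t) t)
    (hf : MemLp f 2 μ) (hf' : MemLp f' 2 μ) (hx : x ∈ Icc a (a + 1)) :
    ‖f x‖ ≤ √c.toReal * (√(∫ t, ‖f t‖ ^ 2 ∂μ) + √(∫ t, ‖f' t‖ ^ 2 ∂μ)) := by
  have : IsProbabilityMeasure (volume.restrict (Ioc a (a + 1))) := ⟨by simp⟩
  have hf'_int : IntegrableOn f' (Ioc a (a + 1)) :=
    (hf'.of_measure_le_smul hc hμ).integrable one_le_two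
  calc ‖f x‖
      ≤ (∫ t in Ioc a (a + 1), ‖f t‖) + ∫ t in Ioc a (a + 1), ‖f' t‖ := by
        simpa only [add_sub_cancel_left, one_mul] using
          mul_norm_le_integral_norm_add_integral_norm_deriv hderiv hf'_int hx
    _ ≤ √c.toReal * √(∫ t, ‖f t‖ ^ 2 ∂μ) + √c.toReal * √(∫ t, ‖f' t‖ ^ 2 ∂μ) :=
        add_le_add (integral_norm_le_of_measure_le_smul hc hμ hf)
          (integral_norm_le_of_measure_le_smul hc hμ hf')
    _ = √c.toReal * (√(∫ t, ‖f t‖ ^ 2 ∂μ) + √(∫ t, ‖f' t‖ ^ 2 ∂μ)) := (mul_add _ _ _).symm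

end Sobolev

section Gaussian

lemma exists_unit_Icc_forall_sq_sub_le (m x : ℝ) :
    ∃ a, x ∈ Icc a (a + 1) ∧ ∀ t ∈ Icc a (a + 1), (t - m) ^ 2 ≤ (x - m) ^ 2 + 1 := by
  rcases le_total m x with hmx | hxm
  · refine ⟨x - 1, ⟨by linarith, by linarith⟩, fun t ⟨hat, hta⟩ ↦ ?_⟩
    cases le_total m t <;> nlinarith
  · refine ⟨x, ⟨le_rfl, by linarith⟩, fun t ⟨hxt, htx⟩ ↦ ?_⟩
    cases le_total m t <;> nlinarith

variable {v : ℝ≥0} {m : ℝ}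

lemma gaussianPDFReal_le_exp_mul {x t : ℝ} (h : (t - m) ^ 2 ≤ (x - m) ^ 2 + 1) :
    gaussianPDFReal m v x ≤ Real.exp (1 / (2 * v)) * gaussianPDFReal m v t := by
  rw [gaussianPDFReal, gaussianPDFReal, mul_left_comm, ← Real.exp_add, ← add_div]
  gcongr
  linarith

lemma sqrt_gaussianPDFReal_zero_mean (x : ℝ) :
    √(gaussianPDFReal 0 v x) = √(√(2 * Real.pi * v))⁻¹ * Real.exp (-x ^ 2 / (4 * v)) := by
  rw [gaussianPDFReal, sub_zero, Real.sqrt_mul (by positivity), ← Real.exp_half, div_div]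
  ring_nf

lemma exp_neg_sq_div_le_exp_neg_sq_div {a b : ℝ} (ha : 0 < a) (hab : a ≤ b) (x : ℝ) :
    Real.exp (-x ^ 2 / a) ≤ Real.exp (-x ^ 2 / b) := by
  rw [neg_div, neg_div]
  gcongr

lemma restrict_le_smul_gaussianReal (hv : v ≠ 0) {s : Set ℝ} (hs : MeasurableSet s) {x : ℝ}
    (h : ∀ t ∈ s, (t - m) ^ 2 ≤ (x - m) ^ 2 + 1) :
    volume.restrict s ≤
      ENNReal.ofReal (Real.exp (1 / (2 * v)) / gaussianPDFReal m v x) • gaussianReal m v := by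
  rw [gaussianReal_of_var_ne_zero m hv]
  refine restrict_le_smul_withDensity ENNReal.ofReal_ne_top hs fun t ht ↦ ?_
  have pdf_pos := gaussianPDFReal_pos m v x hv
  rw [gaussianPDF, ← ENNReal.ofReal_mul (by positivity), ENNReal.one_le_ofReal,
    div_mul_eq_mul_div, one_le_div pdf_pos]
  exact gaussianPDFReal_le_exp_mul (h t ht)

theorem norm_mul_sqrt_gaussianPDFReal_le {E : Type*} [NormedAddCommGroup E] [NormedSpace ℝ E]
    [CompleteSpace E] {G : ℝ → E} (hv : v ≠ 0) (hG : Differentiable ℝ G)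
    (hG_memLp : MemLp G 2 (gaussianReal m v)) (hG'_memLp : MemLp (deriv G) 2 (gaussianReal m v))
    (x : ℝ) :
    ‖G x‖ * √(gaussianPDFReal m v x) ≤ √(Real.exp (1 / (2 * v))) *
      (√(∫ y, ‖G y‖ ^ 2 ∂gaussianReal m v) + √(∫ y, ‖deriv G y‖ ^ 2 ∂gaussianReal m v)) := by
  obtain ⟨a, hxa, near_mean⟩ := exists_unit_Icc_forall_sq_sub_le m x
  have volume_le := restrict_le_smul_gaussianReal hv measurableSet_Ioc
    fun t ht ↦ near_mean t (Ioc_subset_Icc_self ht)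
  have norm_le := norm_le_of_restrict_le_smul ENNReal.ofReal_ne_top volume_le
    (fun t _ ↦ (hG t).hasDerivAt) hG_memLp hG'_memLp hxa
  have pdf_pos := gaussianPDFReal_pos m v x hv
  rwa [ENNReal.toReal_ofReal (by positivity), Real.sqrt_div (by positivity), div_mul_eq_mul_div,
    le_div_iff₀ (Real.sqrt_pos.2 pdf_pos)] at norm_le

end Gaussian

theorem stmt10_general {E : Type*} [NormedAddCommGroup E] [NormedSpace ℝ E] [CompleteSpace E]
    (σ : ℝ) (hσ : 0 < σ) :
    ∃ C > 0, ∀ G : ℝ → E, Differentiable ℝ G →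
      MemLp G 2 (gaussMeasure σ) → MemLp (deriv G) 2 (gaussMeasure σ) →
      ∀ x : ℝ,
        ‖G x‖ * Real.exp (-x ^ 2 / (4 * σ ^ 2)) ≤
          C * (√(∫ y, ‖G y‖ ^ 2 ∂gaussMeasure σ) + √(∫ y, ‖deriv G y‖ ^ 2 ∂gaussMeasure σ)) := by
  set v := (σ ^ 2).toNNReal with v_def
  have v_coe : (v : ℝ) = σ ^ 2 := Real.coe_toNNReal _ (sq_nonneg σ)
  have v_ne_zero : v ≠ 0 := by simpa [v_def] using hσ.ne'
  have normalization_pos : 0 < √(√(2 * Real.pi * v))⁻¹ := by positivity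
  refine ⟨√(Real.exp (1 / (2 * v))) / √(√(2 * Real.pi * v))⁻¹, by positivity,
    fun G hG hG_memLp hG'_memLp x ↦ ?_⟩
  have sharp_bound := norm_mul_sqrt_gaussianPDFReal_le v_ne_zero hG hG_memLp hG'_memLp x
  rw [sqrt_gaussianPDFReal_zero_mean, mul_left_comm, v_coe] at sharp_bound
  rw [div_mul_eq_mul_div, le_div_iff₀' normalization_pos, v_coe]
  exact sharp_bound

theorem stmt10 (σ : ℝ) (hσ : 0 < σ) :
    ∃ C > 0, ∀ G : ℝ → ℝ, ContDiff ℝ 1 G →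
      MemLp G 2 (gaussMeasure σ) → MemLp (deriv G) 2 (gaussMeasure σ) →
      ∀ x : ℝ,
        |G x| * Real.exp (-x ^ 2 / (2 * σ ^ 2)) ≤
          C * (Real.sqrt (∫ y, G y ^ 2 ∂gaussMeasure σ)
               + Real.sqrt (∫ y, deriv G y ^ 2 ∂gaussMeasure σ)) := by
  obtain ⟨C, C_pos, hC⟩ := stmt10_general (E := ℝ) σ hσ
  refine ⟨C, C_pos, fun G hG hG_memLp hG'_memLp x ↦ ?_⟩
  have weight_le := exp_neg_sq_div_le_exp_neg_sq_div (a := 2 * σ ^ 2) (b := 4 * σ ^ 2)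
    (by positivity) (by gcongr; norm_num) x
  simpa only [Real.norm_eq_abs, sq_abs] using (mul_le_mul_of_nonneg_left weight_le
    (norm_nonneg _)).trans (hC G (hG.differentiable one_ne_zero) hG_memLp hG'_memLp x)
end

section
/- For a > 0, the function F(x) = √(a + x²) on ℝ satisfies Assumption 1.2: F is infinitely differentiable and there exist κ ∈ (0, 1/4) and a function ε : ℕ → ℝ with ε(n)/n → 0 as n → ∞ such that |F^(n)(x)| ≤ exp(exp(ε(n))) · exp(κ x²) for every n ∈ ℕ and x ∈ ℝ. -/
open Filter

/-!
The function `x ↦ √(a + x²)` extends holomorphically to the strip `|Im z| < √a`, where the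
extension grows at most linearly. Cauchy's estimate on circles of a fixed radius `r < √a` centred
on the real axis therefore bounds the `n`-th derivative at `x` by `n! r⁻ⁿ (c + |x|)`. The linear
factor is absorbed by `exp (κ x²)` for any `κ > 0`, and `n! r⁻ⁿ` is at most the exponential of a
quadratic polynomial in `n`, so that `ε n` can be taken logarithmic in `n`.
-/

section HolomorphicExtension

open Metric

variable {f : ℂ → ℂ} {g : ℝ → ℝ} {x : ℝ}

theorem deriv_eq_ofReal_deriv (hf : DifferentiableAt ℂ f x)
    (hfg : ∀ᶠ y : ℝ in nhds x, f y = g y) : deriv f x = (deriv g x : ℝ) := by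
  have hasDerivAt_f : HasDerivAt (fun y : ℝ => f y) (deriv f x) x := hf.hasDerivAt.comp_ofReal
  have differentiableAt_g : DifferentiableAt ℝ g x :=
    hf.hasDerivAt.real_of_complex.differentiableAt.congr_of_eventuallyEq <|
      hfg.mono fun y hy => by simp [hy]
  exact hasDerivAt_f.unique (differentiableAt_g.hasDerivAt.ofReal_comp.congr_of_eventuallyEq hfg)

theorem iteratedDeriv_eq_ofReal_iteratedDeriv (n : ℕ) (hf : AnalyticAt ℂ f x)
    (hfg : ∀ᶠ y : ℝ in nhds x, f y = g y) :
    iteratedDeriv n f x = (iteratedDeriv n g x : ℝ) := by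
  induction n generalizing f g with
  | zero => simpa only [iteratedDeriv_zero] using hfg.self_of_nhds
  | succ n ih =>
    have hf_nhds : ∀ᶠ y : ℝ in nhds x, AnalyticAt ℂ f y :=
      Complex.continuous_ofReal.continuousAt.eventually hf.eventually_analyticAt
    rw [iteratedDeriv_succ', iteratedDeriv_succ']
    refine ih hf.deriv ?_
    filter_upwards [hf_nhds, hfg.eventually_nhds] with y hy hfgy
    exact deriv_eq_ofReal_deriv hy.differentiableAt hfgy

theorem abs_iteratedDeriv_le_of_forall_mem_sphere_norm_le {R C : ℝ} (n : ℕ) (hR : 0 < R)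
    (hf : DiffContOnCl ℂ f (ball x R)) (hfg : ∀ᶠ y : ℝ in nhds x, f y = g y)
    (hC : ∀ z ∈ sphere (x : ℂ) R, ‖f z‖ ≤ C) :
    |iteratedDeriv n g x| ≤ n.factorial * C / R ^ n := by
  have analyticAt_f : AnalyticAt ℂ f x :=
    hf.differentiableOn.analyticAt (ball_mem_nhds _ hR)
  rw [← Real.norm_eq_abs, ← Complex.norm_real,
    ← iteratedDeriv_eq_ofReal_iteratedDeriv n analyticAt_f hfg]
  exact Complex.norm_iteratedDeriv_le_of_forall_mem_sphere_norm_le n hR hf hC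

end HolomorphicExtension

section SqrtAddSq

variable {a r : ℝ}

theorem contDiff_sqrt_add_sq (ha : 0 < a) (n : WithTop ℕ∞) :
    ContDiff ℝ n fun x : ℝ => √(a + x ^ 2) :=
  ContDiff.sqrt (by fun_prop) fun x => by positivity

theorem ofReal_add_sq_mem_slitPlane {z : ℂ} (hz : z.im ^ 2 < a) :
    (a : ℂ) + z ^ 2 ∈ Complex.slitPlane := by
  have re_eq : ((a : ℂ) + z ^ 2).re = a + z.re ^ 2 - z.im ^ 2 := by
    simp only [sq, Complex.add_re, Complex.ofReal_re, Complex.mul_re]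
    ring
  exact Or.inl (by rw [re_eq]; linarith [sq_nonneg z.re])

theorem differentiableAt_complexSqrt_add_sq {z : ℂ} (hz : z.im ^ 2 < a) :
    DifferentiableAt ℂ (fun w : ℂ => Complex.sqrt (a + w ^ 2)) z := by
  have : DifferentiableAt ℂ (fun w : ℂ => (a : ℂ) + w ^ 2) z := by fun_prop
  exact this.cpow_const (ofReal_add_sq_mem_slitPlane hz)

theorem complexSqrt_ofReal {t : ℝ} (ht : 0 ≤ t) : Complex.sqrt t = (√t : ℝ) := by
  rw [Complex.sqrt_of_nonneg (by exact_mod_cast ht), Complex.ofReal_re]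

theorem norm_complexSqrt (w : ℂ) : ‖Complex.sqrt w‖ = √‖w‖ := by
  rw [Real.sqrt_eq_rpow, ← Complex.norm_cpow_real]
  simp [Complex.sqrt]

theorem norm_complexSqrt_add_sq_le (ha : 0 ≤ a) (z : ℂ) :
    ‖Complex.sqrt (a + z ^ 2)‖ ≤ √a + ‖z‖ :=
  calc ‖Complex.sqrt (a + z ^ 2)‖ = √‖(a : ℂ) + z ^ 2‖ := norm_complexSqrt _
    _ ≤ √(a + ‖z‖ ^ 2) := by
      gcongr
      exact (norm_add_le _ _).trans_eq (by rw [Complex.norm_of_nonneg ha, norm_pow])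
    _ ≤ √a + ‖z‖ := by
      rw [Real.sqrt_le_left (by positivity), add_sq, Real.sq_sqrt ha]
      have : 0 ≤ 2 * √a * ‖z‖ := by positivity
      linarith

theorem sq_im_le_sq_of_mem_closedBall_ofReal {x : ℝ} {z : ℂ}
    (hz : z ∈ Metric.closedBall (x : ℂ) r) : z.im ^ 2 ≤ r ^ 2 := by
  have abs_im_le : |z.im| ≤ r :=
    calc |z.im| = |(z - x).im| := by simp
      _ ≤ ‖z - x‖ := Complex.abs_im_le_norm _
      _ ≤ r := mem_closedBall_iff_norm.1 hz
  exact sq_le_sq' (abs_le.1 abs_im_le).1 (abs_le.1 abs_im_le).2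

theorem abs_iteratedDeriv_sqrt_add_sq_le (hr : 0 < r) (hra : r ^ 2 < a) (n : ℕ) (x : ℝ) :
    |iteratedDeriv n (fun y : ℝ => √(a + y ^ 2)) x| ≤
      n.factorial * (√a + r + |x|) / r ^ n := by
  have ha : 0 < a := (sq_nonneg r).trans_lt hra
  refine abs_iteratedDeriv_le_of_forall_mem_sphere_norm_le
    (f := fun z => Complex.sqrt (a + z ^ 2)) n hr ?_ ?_ ?_
  · refine DifferentiableOn.diffContOnCl_ball (fun z hz => ?_) subset_rfl
    exact (differentiableAt_complexSqrt_add_sq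
      ((sq_im_le_sq_of_mem_closedBall_ofReal hz).trans_lt hra)).differentiableWithinAt
  · refine Eventually.of_forall fun y => ?_
    rw [← complexSqrt_ofReal (by positivity)]
    push_cast
    rfl
  · intro z hz
    have norm_z_le : ‖z‖ ≤ |x| + r := by
      simpa [mem_sphere_iff_norm.1 hz] using norm_le_norm_add_norm_sub' z (x : ℂ)
    linarith [norm_complexSqrt_add_sq_le ha.le z]

end SqrtAddSq

section Growth

theorem add_abs_le_mul_exp_mul_sq {c κ : ℝ} (hc : 0 ≤ c) (hκ : 0 < κ) (x : ℝ) :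
    c + |x| ≤ (c + 1 + κ⁻¹) * Real.exp (κ * x ^ 2) := by
  have abs_le_one_add_sq : |x| ≤ 1 + x ^ 2 := by nlinarith [sq_nonneg (|x| - 1), sq_abs x]
  calc c + |x| ≤ c + 1 + κ⁻¹ * (κ * x ^ 2) := by
        rw [inv_mul_cancel_left₀ hκ.ne']
        linarith
    _ ≤ (c + 1 + κ⁻¹) * (κ * x ^ 2 + 1) := by
        have : 0 ≤ (c + 1) * (κ * x ^ 2) + κ⁻¹ := by positivity
        linarith
    _ ≤ (c + 1 + κ⁻¹) * Real.exp (κ * x ^ 2) := by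
        gcongr
        exact Real.add_one_le_exp _

theorem le_exp_self (t : ℝ) : t ≤ Real.exp t :=
  (lt_add_one t).le.trans (Real.add_one_le_exp t)

theorem factorial_le_exp_sq (n : ℕ) : (n.factorial : ℝ) ≤ Real.exp (n ^ 2) :=
  calc (n.factorial : ℝ) ≤ (n : ℝ) ^ n := by exact_mod_cast n.factorial_le_pow
    _ ≤ Real.exp n ^ n := by
      gcongr
      exact le_exp_self _
    _ = Real.exp (n ^ 2) := by rw [← Real.exp_nat_mul, sq]

theorem mul_pow_mul_factorial_le_exp {C A : ℝ} (hC : 0 ≤ C) (hA : 0 ≤ A) (n : ℕ) :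
    C * A ^ n * n.factorial ≤ Real.exp ((C + A + 1) * (n + 1) ^ 2) :=
  calc C * A ^ n * n.factorial ≤ Real.exp C * Real.exp A ^ n * Real.exp (n ^ 2) := by
        gcongr
        · exact le_exp_self C
        · exact le_exp_self A
        · exact factorial_le_exp_sq n
    _ = Real.exp (C + n * A + n ^ 2) := by
        rw [← Real.exp_nat_mul, ← Real.exp_add, ← Real.exp_add]
    _ ≤ Real.exp ((C + A + 1) * (n + 1) ^ 2) := by
        gcongr
        have : 0 ≤ C * n * (n + 2) + A * (n ^ 2 + n + 1) + 2 * n + 1 := by positivity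
        linarith

theorem tendsto_add_mul_log_succ_div_atTop (b c : ℝ) :
    Tendsto (fun n : ℕ => (b + c * Real.log (n + 1)) / n) atTop (nhds 0) := by
  have const_div : Tendsto (fun n : ℕ => b / n) atTop (nhds 0) :=
    tendsto_const_div_atTop_nhds_zero_nat b
  have log_div : Tendsto (fun n : ℕ => Real.log (n + 1) / n) atTop (nhds 0) := by
    have := (Real.tendsto_pow_log_div_mul_add_atTop 1 (-1) 1 one_ne_zero).comp
      (tendsto_atTop_add_const_right atTop (1 : ℝ) tendsto_natCast_atTop_atTop)
    simpa [Function.comp_def] using this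
  simpa [add_div, mul_div_assoc] using const_div.add (log_div.const_mul c)

theorem exists_mul_pow_mul_factorial_le_exp_exp {C A : ℝ} (hC : 0 ≤ C) (hA : 0 ≤ A) :
    ∃ ε : ℕ → ℝ, Tendsto (fun n : ℕ => ε n / n) atTop (nhds 0) ∧
      ∀ n : ℕ, C * A ^ n * n.factorial ≤ Real.exp (Real.exp (ε n)) := by
  refine ⟨fun n => Real.log (C + A + 1) + 2 * Real.log (n + 1),
    tendsto_add_mul_log_succ_div_atTop _ _, fun n => ?_⟩
  have exp_eps : Real.exp (Real.log (C + A + 1) + 2 * Real.log (n + 1)) =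
      (C + A + 1) * (n + 1) ^ 2 := by
    rw [Real.exp_add, Real.exp_log (by positivity), mul_comm 2, Real.exp_mul,
      Real.exp_log (by positivity), Real.rpow_two]
  rw [exp_eps]
  exact mul_pow_mul_factorial_le_exp hC hA n

end Growth

theorem stmt12 (a : ℝ) (ha : 0 < a) :
    (∀ n : ℕ, ContDiff ℝ n (fun x : ℝ => Real.sqrt (a + x ^ 2))) ∧
    ∃ κ ∈ Set.Ioo (0 : ℝ) (1 / 4), ∃ ε : ℕ → ℝ,
      Tendsto (fun n : ℕ => ε n / n) atTop (nhds 0) ∧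
      ∀ (n : ℕ) (x : ℝ),
        |iteratedDeriv n (fun y : ℝ => Real.sqrt (a + y ^ 2)) x|
          ≤ Real.exp (Real.exp (ε n)) * Real.exp (κ * x ^ 2) := by
  refine ⟨fun n => contDiff_sqrt_add_sq ha n, 1 / 8, by norm_num, ?_⟩
  obtain ⟨r, hr, hra⟩ : ∃ r : ℝ, 0 < r ∧ r ^ 2 < a :=
    ⟨√a / 2, by positivity, by rw [div_pow, Real.sq_sqrt ha.le]; linarith⟩
  set C : ℝ := √a + r + 1 + (1 / 8)⁻¹
  obtain ⟨ε, hε, hCε⟩ := exists_mul_pow_mul_factorial_le_exp_exp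
    (show 0 ≤ C by positivity) (show 0 ≤ r⁻¹ by positivity)
  refine ⟨ε, hε, fun n x => ?_⟩
  calc |iteratedDeriv n (fun y : ℝ => √(a + y ^ 2)) x|
      ≤ n.factorial * (√a + r + |x|) / r ^ n := abs_iteratedDeriv_sqrt_add_sq_le hr hra n x
    _ ≤ n.factorial * (C * Real.exp (1 / 8 * x ^ 2)) / r ^ n := by
      gcongr
      exact add_abs_le_mul_exp_mul_sq (by positivity) (by norm_num) x
    _ = C * r⁻¹ ^ n * n.factorial * Real.exp (1 / 8 * x ^ 2) := by rw [inv_pow]; ring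
    _ ≤ Real.exp (Real.exp (ε n)) * Real.exp (1 / 8 * x ^ 2) := by
      gcongr
      exact hCε n
end

section
/- Let γ > 0 and δ ∈ (0, e^{-1}), and let F : ℝ → ℝ be an infinitely differentiable function such that F^(j)(0) = 0 for every j ∈ ℕ and F(x) = exp(−γ · log(1/x) · log(log(1/x))) (i.e. F(x) = x^{γ log log(1/x)}) for all x ∈ (0, δ]. Then for every c ∈ (0, 1/γ) there exists N ∈ ℕ such that for every n ≥ N, sup_{x ∈ [0, δ]} |F^(n)(x)| ≥ exp(exp(c n)). In particular, such an F does not satisfy Assumption 1.2. -/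
open Filter

open Set Topology
open scoped ContDiff

/-!
Since `F` is flat at `0`, Taylor's formula with Lagrange remainder reads `F x = F⁽ⁿ⁾(y) xⁿ / n!`
for some `y ∈ (0, x)`, so `|F⁽ⁿ⁾|` reaches `|F x| / xⁿ` on `[0, x]`. With `L = log (1 / x)` this
quotient is at least `exp (L (n - γ log L))`, and the choice `log L = c n` makes the latter
`exp (exp (c n) (1 - γ c) n)`, which exceeds `exp (exp (c n))` as soon as `(1 - γ c) n ≥ 1`.
On a bounded interval this rules out every bound `exp (exp (ε n)) exp (κ y²)` with `ε n = o(n)`.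
-/

theorem taylorWithinEval_eq_zero_of_iteratedDeriv_eq_zero {E : Type*} [NormedAddCommGroup E]
    [NormedSpace ℝ E] {f : ℝ → E} {n : ℕ} {s : Set ℝ} {a : ℝ} (hs : UniqueDiffOn ℝ s) (ha : a ∈ s)
    (hf : ContDiffAt ℝ n f a) (hflat : ∀ k ≤ n, iteratedDeriv k f a = 0) (x : ℝ) :
    taylorWithinEval f n s a x = 0 := by
  rw [taylor_within_apply]
  refine Finset.sum_eq_zero fun k hk => ?_
  have hkn : k ≤ n := Finset.mem_range_succ_iff.1 hk
  rw [iteratedDerivWithin_eq_iteratedDeriv hs (hf.of_le (mod_cast hkn)) ha, hflat k hkn, smul_zero]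

theorem exists_eq_iteratedDeriv_mul_pow_div_factorial_of_flat {f : ℝ → ℝ} {n : ℕ} {a x : ℝ}
    (hax : a ≠ x) (hf : ContDiff ℝ (n + 1) f) (hflat : ∀ k ≤ n, iteratedDeriv k f a = 0) :
    ∃ y ∈ uIoo a x, f x = iteratedDeriv (n + 1) f y * (x - a) ^ (n + 1) / (n + 1).factorial := by
  obtain ⟨y, hy, htaylor⟩ := taylor_mean_remainder_lagrange_iteratedDeriv hax hf.contDiffOn
  have hpoly : taylorWithinEval f n (uIcc a x) a x = 0 :=
    taylorWithinEval_eq_zero_of_iteratedDeriv_eq_zero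
      (uniqueDiffOn_uIcc hax) left_mem_uIcc (hf.of_le (mod_cast n.le_succ)).contDiffAt hflat x
  rw [hpoly, sub_zero] at htaylor
  exact ⟨y, hy, htaylor⟩

theorem exists_abs_le_abs_iteratedDeriv_mul_pow_of_flat {f : ℝ → ℝ} {n : ℕ} {a x : ℝ}
    (hax : a ≠ x) (hf : ContDiff ℝ (n + 1) f) (hflat : ∀ k ≤ n, iteratedDeriv k f a = 0) :
    ∃ y ∈ uIoo a x, |f x| ≤ |iteratedDeriv (n + 1) f y| * |x - a| ^ (n + 1) := by
  obtain ⟨y, hy, hfx⟩ := exists_eq_iteratedDeriv_mul_pow_div_factorial_of_flat hax hf hflat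
  refine ⟨y, hy, ?_⟩
  rw [hfx, abs_div, abs_mul, abs_pow, Nat.abs_cast]
  exact div_le_self (by positivity) (mod_cast (n + 1).factorial_pos)

theorem exists_exp_le_abs_iteratedDeriv_of_flat {f : ℝ → ℝ} {n : ℕ} {L A : ℝ} (hn : n ≠ 0)
    (hf : ContDiff ℝ n f) (hflat : ∀ k < n, iteratedDeriv k f 0 = 0)
    (hlower : Real.exp (-A) ≤ |f (Real.exp (-L))|) :
    ∃ y ∈ Ioo 0 (Real.exp (-L)), Real.exp (n * L - A) ≤ |iteratedDeriv n f y| := by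
  obtain ⟨m, rfl⟩ := Nat.exists_eq_succ_of_ne_zero hn
  have hx : 0 < Real.exp (-L) := Real.exp_pos _
  obtain ⟨y, hy, hfy⟩ := exists_abs_le_abs_iteratedDeriv_mul_pow_of_flat hx.ne
    (mod_cast hf) fun k hk => hflat k (Nat.lt_succ_of_le hk)
  rw [uIoo_of_lt hx] at hy
  rw [sub_zero, abs_of_pos hx] at hfy
  refine ⟨y, hy, le_of_mul_le_mul_right ?_ (pow_pos hx (m + 1))⟩
  calc Real.exp ((m + 1 : ℕ) * L - A) * Real.exp (-L) ^ (m + 1)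
      = Real.exp (-A) := by rw [← Real.exp_nat_mul, ← Real.exp_add]; ring_nf
    _ ≤ |iteratedDeriv (m + 1) f y| * Real.exp (-L) ^ (m + 1) := hlower.trans hfy

theorem tendsto_exp_neg_exp_mul_natCast_nhdsGT_zero {c : ℝ} (hc : 0 < c) :
    Tendsto (fun n : ℕ => Real.exp (-Real.exp (c * n))) atTop (𝓝[>] 0) :=
  Real.tendsto_exp_atBot_nhdsGT.comp <| tendsto_neg_atTop_atBot.comp <|
    Real.tendsto_exp_atTop.comp <| tendsto_natCast_atTop_atTop.const_mul_atTop hc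

theorem eventually_exists_exp_exp_le_abs_iteratedDeriv {f : ℝ → ℝ} {γ c δ : ℝ}
    (hf : ContDiff ℝ ∞ f) (hflat : ∀ k : ℕ, iteratedDeriv k f 0 = 0)
    (hlower : ∀ᶠ x in 𝓝[>] 0,
      Real.exp (-(γ * Real.log (1 / x) * Real.log (Real.log (1 / x)))) ≤ |f x|)
    (hc : 0 < c) (hγc : γ * c < 1) (hδ : 0 < δ) :
    ∀ᶠ n : ℕ in atTop, ∃ x ∈ Ioo 0 δ, Real.exp (Real.exp (c * n)) ≤ |iteratedDeriv n f x| := by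
  have hx := tendsto_exp_neg_exp_mul_natCast_nhdsGT_zero hc
  have hlarge : ∀ᶠ n : ℕ in atTop, 1 ≤ (1 - γ * c) * n :=
    (tendsto_natCast_atTop_atTop.const_mul_atTop (sub_pos.2 hγc)).eventually_ge_atTop 1
  filter_upwards [hx.eventually hlower, hx.eventually (Ioo_mem_nhdsGT hδ), hlarge,
    eventually_ne_atTop 0] with n hfx hxδ hn hn0
  simp only [one_div, Real.log_inv, Real.log_exp, neg_neg] at hfx
  obtain ⟨y, hy, hfy⟩ := exists_exp_le_abs_iteratedDeriv_of_flat hn0 (contDiff_infty.1 hf n)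
    (fun k _ => hflat k) hfx
  refine ⟨y, ⟨hy.1, hy.2.trans hxδ.2⟩, (Real.exp_le_exp.2 ?_).trans hfy⟩
  calc Real.exp (c * n) ≤ Real.exp (c * n) * ((1 - γ * c) * n) :=
        le_mul_of_one_le_right (Real.exp_pos _).le hn
    _ = n * Real.exp (c * n) - γ * Real.exp (c * n) * (c * n) := by ring

theorem tendsto_exp_sub_exp_atTop {α : Type*} {l : Filter α} {u v : α → ℝ}
    (hu : Tendsto u l atTop) (huv : Tendsto (fun a => u a - v a) l atTop) :
    Tendsto (fun a => Real.exp (u a) - Real.exp (v a)) l atTop := by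
  have hratio : Tendsto (fun a => 1 - Real.exp (-(u a - v a))) l (𝓝 1) := by
    simpa using (Real.tendsto_exp_neg_atTop_nhds_zero.comp huv).const_sub 1
  refine ((Real.tendsto_exp_atTop.comp hu).atTop_mul_pos one_pos hratio).congr fun a => ?_
  rw [Function.comp_apply, mul_sub, mul_one, ← Real.exp_add]
  ring_nf

theorem eventually_exp_exp_mul_lt_exp_exp {ε : ℕ → ℝ} {c r : ℝ} (hc : 0 < c) (hrc : r < c)
    (hε : Tendsto (fun n : ℕ => ε n / n) atTop (𝓝 r)) (C : ℝ) :
    ∀ᶠ n : ℕ in atTop, Real.exp (Real.exp (ε n)) * C < Real.exp (Real.exp (c * n)) := by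
  have hgap : Tendsto (fun n : ℕ => c * n - ε n) atTop atTop := by
    refine (tendsto_natCast_atTop_atTop.atTop_mul_pos (sub_pos.2 hrc) (hε.const_sub c)).congr' ?_
    filter_upwards [eventually_ne_atTop 0] with n hn
    field_simp
  have hexp := Real.tendsto_exp_atTop.comp <|
    tendsto_exp_sub_exp_atTop (tendsto_natCast_atTop_atTop.const_mul_atTop hc) hgap
  filter_upwards [hexp.eventually_gt_atTop C] with n hn
  rwa [Function.comp_apply, Real.exp_sub, lt_div_iff₀' (Real.exp_pos _)] at hn

theorem not_forall_le_exp_exp_mul_of_frequently_exp_exp_le {α : Type*} {s : Set α}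
    {g : ℕ → α → ℝ} {w : α → ℝ} {ε : ℕ → ℝ} {c r : ℝ} (hc : 0 < c) (hrc : r < c)
    (hg : ∃ᶠ n : ℕ in atTop, ∃ x ∈ s, Real.exp (Real.exp (c * n)) ≤ g n x)
    (hw : BddAbove (w '' s)) (hε : Tendsto (fun n : ℕ => ε n / n) atTop (𝓝 r)) :
    ¬ ∀ n, ∀ x ∈ s, g n x ≤ Real.exp (Real.exp (ε n)) * w x := by
  intro hbound
  obtain ⟨C, hC⟩ := hw
  obtain ⟨n, ⟨x, hxs, hgx⟩, hn⟩ :=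
    (hg.and_eventually (eventually_exp_exp_mul_lt_exp_exp hc hrc hε C)).exists
  have hwx : w x ≤ C := hC (mem_image_of_mem w hxs)
  refine (hgx.trans (hbound n x hxs)).not_gt (lt_of_le_of_lt ?_ hn)
  gcongr

theorem stmt14_general {γ : ℝ} (hγ : 0 < γ) {F : ℝ → ℝ} (hF : ContDiff ℝ ∞ F)
    (hflat : ∀ j : ℕ, iteratedDeriv j F 0 = 0)
    (hlower : ∀ᶠ x in 𝓝[>] 0,
      Real.exp (-(γ * Real.log (1 / x) * Real.log (Real.log (1 / x)))) ≤ |F x|) :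
    (∀ δ > 0, ∀ c ∈ Ioo 0 (1 / γ), ∀ᶠ n : ℕ in atTop, ∃ x ∈ Ioo 0 δ,
      Real.exp (Real.exp (c * n)) ≤ |iteratedDeriv n F x|) ∧
    ∀ (κ : ℝ) (ε : ℕ → ℝ), Tendsto (fun n : ℕ => ε n / n) atTop (𝓝 0) →
      ¬ ∀ (n : ℕ) (y : ℝ),
        |iteratedDeriv n F y| ≤ Real.exp (Real.exp (ε n)) * Real.exp (κ * y ^ 2) := by
  refine ⟨fun δ hδ c hc => eventually_exists_exp_exp_le_abs_iteratedDeriv hF hflat hlower hc.1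
    ((lt_div_iff₀' hγ).1 hc.2) hδ, fun κ ε hε hbound => ?_⟩
  obtain ⟨c, hc, hcγ⟩ := exists_between (one_div_pos.2 hγ)
  have hgrowth := eventually_exists_exp_exp_le_abs_iteratedDeriv hF hflat hlower hc
    ((lt_div_iff₀' hγ).1 hcγ) one_pos
  have hweight : BddAbove ((fun y => Real.exp (κ * y ^ 2)) '' Ioo 0 1) :=
    (isCompact_Icc.bddAbove_image (by fun_prop)).mono (image_mono Ioo_subset_Icc_self)
  exact not_forall_le_exp_exp_mul_of_frequently_exp_exp_le hc hc hgrowth.frequently hweight hε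
    fun n y _ => hbound n y

theorem stmt14 (γ δ : ℝ) (hγ : 0 < γ) (hδ : δ ∈ Set.Ioo (0 : ℝ) (Real.exp (-1)))
    (F : ℝ → ℝ) (hF : ∀ n : ℕ, ContDiff ℝ n F)
    (hflat : ∀ j : ℕ, iteratedDeriv j F 0 = 0)
    (hform : ∀ x ∈ Set.Ioc (0 : ℝ) δ,
      F x = Real.exp (-(γ * Real.log (1 / x) * Real.log (Real.log (1 / x))))) :
    (∀ c ∈ Set.Ioo (0 : ℝ) (1 / γ), ∃ N : ℕ, ∀ n ≥ N, ∃ x ∈ Set.Icc (0 : ℝ) δ,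
      Real.exp (Real.exp (c * n)) ≤ |iteratedDeriv n F x|) ∧
    ¬ (∃ κ ∈ Set.Ioo (0 : ℝ) (1 / 4), ∃ ε : ℕ → ℝ,
        Tendsto (fun n : ℕ => ε n / n) atTop (nhds 0) ∧
        ∀ (n : ℕ) (y : ℝ),
          |iteratedDeriv n F y| ≤ Real.exp (Real.exp (ε n)) * Real.exp (κ * y ^ 2)) := by
  have hlower : ∀ᶠ x in 𝓝[>] 0,
      Real.exp (-(γ * Real.log (1 / x) * Real.log (Real.log (1 / x)))) ≤ |F x| := by
    filter_upwards [Ioc_mem_nhdsGT hδ.1] with x hx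
    exact (hform x hx).symm.le.trans (le_abs_self _)
  obtain ⟨hgrowth, hnot⟩ := stmt14_general hγ (contDiff_infty.2 hF) hflat hlower
  refine ⟨fun c hc => ?_, fun ⟨κ, _, ε, hε, hbound⟩ => hnot κ ε hε hbound⟩
  obtain ⟨N, hN⟩ := eventually_atTop.1 (hgrowth δ hδ.1 c hc)
  exact ⟨N, fun n hn => (hN n hn).imp fun x hx => ⟨Ioo_subset_Icc_self hx.1, hx.2⟩⟩
end

section
/- Let (Ω, 𝔉, P) be a probability space, let κ ∈ (0, 1/2), α > 4κ, C₀ > 0, and let (S_k)_{k ∈ ℤ²} be a family of nonnegative random variables on Ω such that P(S_k > A) ≤ C₀ e^{-A²/2} for every k ∈ ℤ² and every A > 0. Then E[ sup_{k ∈ ℤ²} e^{κ S_k²} ⟨k⟩^{-α} ] < ∞, where ⟨k⟩ = (1 + |k|²)^{1/2} and |k| is the Euclidean norm of k ∈ ℤ² ⊂ ℝ². -/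
open MeasureTheory

/-!
For `q = 1 / (2κ) > 1`, the Gaussian tail of `S k` turns into the power tail
`P(exp (κ (S k)²) > s) ≤ C s ^ (-q)`. By the union bound the supremum exceeds `t` with probability
at most `C t ^ (-q) ∑ₖ ⟨k⟩ ^ (-α q)`, where the sum over `ℤ²` is finite because `α q > 2`, and
`t ^ (-q)` is integrable at infinity because `q > 1`.
-/

section TailBounds

open scoped ENNReal

variable {Ω ι : Type*} [MeasurableSpace Ω] {μ : Measure Ω}

-- The lower integral of `f` is the supremum over the simple functions below `f`, and the
-- layer-cake formula holds for each of those.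
lemma lintegral_le_lintegral_meas_ofReal_lt (f : Ω → ℝ≥0∞) :
    ∫⁻ ω, f ω ∂μ ≤ ∫⁻ t in Set.Ioi (0 : ℝ), μ {ω | ENNReal.ofReal t < f ω} := by
  rw [lintegral_eq_nnreal]
  refine iSup₂_le fun φ hφ => ?_
  calc (φ.map (↑)).lintegral μ
      = ∫⁻ ω, ENNReal.ofReal (φ ω : ℝ) ∂μ := by
        simp [← SimpleFunc.lintegral_eq_lintegral]
    _ = ∫⁻ t in Set.Ioi (0 : ℝ), μ {ω | t < (φ ω : ℝ)} :=
        lintegral_eq_lintegral_meas_lt μ (.of_forall fun ω => (φ ω).2)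
          φ.measurable.coe_nnreal_real.aemeasurable
    _ ≤ ∫⁻ t in Set.Ioi (0 : ℝ), μ {ω | ENNReal.ofReal t < f ω} := by
        refine setLIntegral_mono' measurableSet_Ioi fun t ht => measure_mono fun ω hω => ?_
        refine lt_of_lt_of_le ?_ (hφ ω)
        rw [← ENNReal.ofReal_coe_nnreal]
        exact (ENNReal.ofReal_lt_ofReal_iff_of_nonneg (le_of_lt ht)).2 hω

lemma lintegral_lt_top_of_meas_ofReal_lt_le_rpow [IsFiniteMeasure μ] {f : Ω → ℝ≥0∞} {C : ℝ≥0∞}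
    {q : ℝ} (hC : C ≠ ∞) (hq : 1 < q)
    (htail : ∀ t > (1 : ℝ), μ {ω | ENNReal.ofReal t < f ω} ≤ C * ENNReal.ofReal (t ^ (-q))) :
    ∫⁻ ω, f ω ∂μ < ∞ := by
  have hbounded : ∫⁻ t in Set.Ioc (0 : ℝ) 1, μ {ω | ENNReal.ofReal t < f ω} < ∞ :=
    calc ∫⁻ t in Set.Ioc (0 : ℝ) 1, μ {ω | ENNReal.ofReal t < f ω}
        ≤ ∫⁻ _ in Set.Ioc (0 : ℝ) 1, μ Set.univ :=
          lintegral_mono fun _ => measure_mono (Set.subset_univ _)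
      _ < ∞ := by simp
  have hpower : ∫⁻ t in Set.Ioi (1 : ℝ), μ {ω | ENNReal.ofReal t < f ω} < ∞ :=
    calc ∫⁻ t in Set.Ioi (1 : ℝ), μ {ω | ENNReal.ofReal t < f ω}
        ≤ ∫⁻ t in Set.Ioi (1 : ℝ), C * ENNReal.ofReal (t ^ (-q)) :=
          setLIntegral_mono' measurableSet_Ioi htail
      _ = C * ∫⁻ t in Set.Ioi (1 : ℝ), ENNReal.ofReal (t ^ (-q)) := lintegral_const_mul' _ _ hC
      _ < ∞ := ENNReal.mul_lt_top hC.lt_top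
          (integrableOn_Ioi_rpow_of_lt (neg_lt_neg hq) one_pos).lintegral_lt_top
  calc ∫⁻ ω, f ω ∂μ
      ≤ ∫⁻ t in Set.Ioc (0 : ℝ) 1 ∪ Set.Ioi 1, μ {ω | ENNReal.ofReal t < f ω} := by
        rw [Set.Ioc_union_Ioi_eq_Ioi zero_le_one]
        exact lintegral_le_lintegral_meas_ofReal_lt f
    _ ≤ _ := lintegral_union_le _ _ _
    _ < ∞ := ENNReal.add_lt_top.2 ⟨hbounded, hpower⟩

lemma meas_lt_iSup_le_tsum {β : Type*} [CompleteLinearOrder β] [Countable ι] (f : ι → Ω → β)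
    (a : β) : μ {ω | a < ⨆ i, f i ω} ≤ ∑' i, μ {ω | a < f i ω} := by
  simpa only [lt_iSup_iff, Set.ofPred_exists] using measure_iUnion_le fun i => {ω | a < f i ω}

-- The total mass enters the constant to cover `s ≤ 1`, a range on which `htail` says nothing.
lemma meas_lt_exp_mul_le_rpow {Y : Ω → ℝ} {C : ℝ≥0∞} {κ b s : ℝ} (hκ : 0 < κ) (hb : 0 ≤ b)
    (hs : 0 < s)
    (htail : ∀ a > (0 : ℝ), μ {ω | a < Y ω} ≤ C * ENNReal.ofReal (Real.exp (-(b * a)))) :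
    μ {ω | s < Real.exp (κ * Y ω)} ≤ max C (μ Set.univ) * ENNReal.ofReal (s ^ (-(b / κ))) := by
  rcases le_or_gt s 1 with hs1 | hs1
  · have hone_le : 1 ≤ ENNReal.ofReal (s ^ (-(b / κ))) := ENNReal.one_le_ofReal.2 <|
      Real.one_le_rpow_of_pos_of_le_one_of_nonpos hs hs1 (neg_nonpos.2 (div_nonneg hb hκ.le))
    calc μ {ω | s < Real.exp (κ * Y ω)} ≤ μ Set.univ * 1 := by
          simpa only [mul_one] using measure_mono (Set.subset_univ _)
      _ ≤ max C (μ Set.univ) * ENNReal.ofReal (s ^ (-(b / κ))) :=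
          mul_le_mul' (le_max_right _ _) hone_le
  · have hset : {ω | s < Real.exp (κ * Y ω)} = {ω | Real.log s / κ < Y ω} := by
      ext ω
      simp only [Set.mem_ofPred_eq, ← Real.log_lt_iff_lt_exp hs, div_lt_iff₀' hκ]
    have hexp : Real.exp (-(b * (Real.log s / κ))) = s ^ (-(b / κ)) := by
      rw [Real.rpow_def_of_pos hs]
      ring_nf
    rw [hset, ← hexp]
    exact (htail _ (div_pos (Real.log_pos hs1) hκ)).trans (mul_le_mul_left (le_max_left _ _) _)

theorem lintegral_iSup_exp_mul_div_lt_top [IsFiniteMeasure μ] [Countable ι] {Y : ι → Ω → ℝ}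
    {w : ι → ℝ} {C : ℝ≥0∞} {κ b : ℝ} (hκ : 0 < κ) (hκb : κ < b) (hC : C ≠ ∞) (hw : ∀ i, 0 < w i)
    (hsum : Summable fun i => w i ^ (-(b / κ)))
    (htail : ∀ i, ∀ a > (0 : ℝ), μ {ω | a < Y i ω} ≤ C * ENNReal.ofReal (Real.exp (-(b * a)))) :
    ∫⁻ ω, ⨆ i, ENNReal.ofReal (Real.exp (κ * Y i ω) / w i) ∂μ < ∞ := by
  set D := max C (μ Set.univ)
  have hD : D ≠ ∞ := max_ne_top hC (measure_ne_top μ _)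
  refine lintegral_lt_top_of_meas_ofReal_lt_le_rpow
    (C := D * ∑' i, ENNReal.ofReal (w i ^ (-(b / κ)))) (q := b / κ)
    (ENNReal.mul_ne_top hD hsum.tsum_ofReal_ne_top) ((one_lt_div hκ).2 hκb) fun t ht => ?_
  have ht0 : 0 < t := one_pos.trans ht
  have hterm (i : ι) : μ {ω | ENNReal.ofReal t < ENNReal.ofReal (Real.exp (κ * Y i ω) / w i)} ≤
      D * ENNReal.ofReal (w i ^ (-(b / κ))) * ENNReal.ofReal (t ^ (-(b / κ))) := by
    simp only [ENNReal.ofReal_lt_ofReal_iff_of_nonneg ht0.le, lt_div_iff₀ (hw i)]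
    refine (meas_lt_exp_mul_le_rpow hκ (hκ.trans hκb).le (mul_pos ht0 (hw i)) (htail i)).trans_eq ?_
    rw [Real.mul_rpow ht0.le (hw i).le, mul_comm (t ^ _),
      ENNReal.ofReal_mul (Real.rpow_nonneg (hw i).le _), mul_assoc]
  calc _ ≤ ∑' i, μ {ω | ENNReal.ofReal t < ENNReal.ofReal (Real.exp (κ * Y i ω) / w i)} :=
        meas_lt_iSup_le_tsum _ _
    _ ≤ _ := ENNReal.tsum_le_tsum hterm
    _ = _ := by rw [ENNReal.tsum_mul_right, ENNReal.tsum_mul_left]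

theorem stmt15_general [IsFiniteMeasure μ] [Countable ι] {S : ι → Ω → ℝ} {w : ι → ℝ} {C : ℝ≥0∞}
    {κ b : ℝ} (hκ : 0 < κ) (hκb : κ < b) (hC : C ≠ ∞) (hw : ∀ i, 0 < w i)
    (hsum : Summable fun i => w i ^ (-(b / κ))) (hnonneg : ∀ i ω, 0 ≤ S i ω)
    (htail : ∀ i, ∀ A > (0 : ℝ),
      μ {ω | A < S i ω} ≤ C * ENNReal.ofReal (Real.exp (-(b * A ^ 2)))) :
    ∫⁻ ω, ⨆ i, ENNReal.ofReal (Real.exp (κ * S i ω ^ 2) / w i) ∂μ < ∞ := by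
  refine lintegral_iSup_exp_mul_div_lt_top hκ hκb hC hw hsum fun i a ha => ?_
  simpa only [Real.sqrt_lt ha.le (hnonneg i _), Real.sq_sqrt ha.le]
    using htail i (√a) (Real.sqrt_pos.2 ha)

end TailBounds

/-- The Japanese bracket `⟨k⟩ = (1 + |k|²)^(1/2)` on `ℤ²`. The Euclidean norm is written out
because `ℤ × ℤ` carries the sup norm. -/
noncomputable def japaneseBracket (k : ℤ × ℤ) : ℝ :=
  (1 + ((k.1 : ℝ) ^ 2 + (k.2 : ℝ) ^ 2)) ^ ((1 : ℝ) / 2)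

lemma japaneseBracket_pos (k : ℤ × ℤ) : 0 < japaneseBracket k := by
  unfold japaneseBracket
  positivity

lemma norm_le_japaneseBracket (k : ℤ × ℤ) : ‖k‖ ≤ japaneseBracket k := by
  rw [japaneseBracket, ← Real.sqrt_eq_rpow]
  exact max_le (Real.abs_le_sqrt (by linarith [sq_nonneg (k.2 : ℝ)]))
    (Real.abs_le_sqrt (by linarith [sq_nonneg (k.1 : ℝ)]))

lemma summable_int_prod_norm_rpow {s : ℝ} (hs : 2 < s) :
    Summable fun k : ℤ × ℤ => ‖k‖ ^ (-s) := by
  rw [← (finTwoArrowEquiv ℤ).summable_iff]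
  refine (EisensteinSeries.summable_one_div_norm_rpow hs).congr fun x => ?_
  simp [Prod.norm_def, EisensteinSeries.norm_eq_max_natAbs, Int.norm_eq_abs]

lemma summable_japaneseBracket_rpow {s : ℝ} (hs : 2 < s) :
    Summable fun k => japaneseBracket k ^ (-s) := by
  refine (summable_int_prod_norm_rpow hs).of_norm_bounded_eventually ?_
  filter_upwards [(Set.finite_singleton (0 : ℤ × ℤ)).compl_mem_cofinite] with k hk
  rw [Real.norm_of_nonneg (Real.rpow_nonneg (japaneseBracket_pos k).le _)]
  exact Real.rpow_le_rpow_of_nonpos (norm_pos_iff.2 hk) (norm_le_japaneseBracket k) (by linarith)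

lemma summable_japaneseBracket_rpow_rpow {α q : ℝ} (hαq : 2 < α * q) :
    Summable fun k => (japaneseBracket k ^ α) ^ (-q) := by
  simpa only [← Real.rpow_mul (japaneseBracket_pos _).le, mul_neg]
    using summable_japaneseBracket_rpow hαq

theorem stmt15 {Ω : Type*} [MeasurableSpace Ω] (P : Measure Ω) [IsProbabilityMeasure P]
    (κ α C₀ : ℝ) (hκ : κ ∈ Set.Ioo (0 : ℝ) (1 / 2)) (hα : 4 * κ < α) (hC₀ : 0 < C₀)
    (S : ℤ × ℤ → Ω → ℝ) (hmeas : ∀ k, Measurable (S k)) (hnonneg : ∀ k ω, 0 ≤ S k ω)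
    (htail : ∀ k : ℤ × ℤ, ∀ A > (0 : ℝ),
      P {ω | A < S k ω} ≤ ENNReal.ofReal (C₀ * Real.exp (-A ^ 2 / 2))) :
    ∫⁻ ω, ⨆ k : ℤ × ℤ, ENNReal.ofReal
        (Real.exp (κ * S k ω ^ 2)
          / ((1 + ((k.1 : ℝ) ^ 2 + (k.2 : ℝ) ^ 2)) ^ ((1 : ℝ) / 2)) ^ α) ∂P < ⊤ := by
  have hexponent : 2 < α * (1 / 2 / κ) := by
    rw [← mul_div_assoc, lt_div_iff₀ hκ.1]
    linarith
  refine stmt15_general hκ.1 hκ.2 (C := ENNReal.ofReal C₀) ENNReal.ofReal_ne_top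
    (fun k => Real.rpow_pos_of_pos (japaneseBracket_pos k) α)
    (summable_japaneseBracket_rpow_rpow hexponent) hnonneg fun k A hA => ?_
  rw [← ENNReal.ofReal_mul hC₀.le, one_div_mul_eq_div, ← neg_div]
  exact htail k A hA
end
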